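/- arXiv:0902.1330 — 2 statements merged into one kernel-verified Lean document; each statement's English description precedes it below -/
import Mathlib

section
/- Let 1 ≤ p < ∞ and let X be a Banach space. There is a constant C > 0 depending only on p such that the following holds: if f = Σ_J x_J h_J is a finitely supported X-valued Haar expansion whose Haar support is partitioned into blocks {B(I) : I ∈ E} with Carleson constant ⟦E⟧ ≤ 4, then ‖f‖_{H^p_X}^p ≤ C · Σ_{I∈E} ‖f_I‖_{H^p_X}^p, where f_I = Σ_{J ∈ B(I)} x_J h_J. -/
open MeasureTheory Set
open scoped ENNReal NNReal Classical

noncomputable section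

/-- A dyadic subinterval of `[0,1)`: the half-open interval
`[k/2^n, (k+1)/2^n)` with `k < 2^n`. -/
structure DyadicI where
  n : ℕ
  k : ℕ
  hk : k < 2 ^ n

instance : Nonempty DyadicI := ⟨⟨0, 0, by norm_num⟩⟩

namespace DyadicI

/-- The length `|I| = 2^{-n}` of a dyadic interval. -/
def len (I : DyadicI) : ℝ := (2 : ℝ) ^ (-(I.n : ℤ))

/-- The left endpoint `k 2^{-n}` of a dyadic interval. -/
def lep (I : DyadicI) : ℝ := (I.k : ℝ) * I.len

/-- The underlying point set `[k/2^n, (k+1)/2^n)` of a dyadic interval. -/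
def toSet (I : DyadicI) : Set ℝ := Set.Ico I.lep (I.lep + I.len)

/-- The `L^∞`-normalized Haar function `h_I`: `1` on the left half of `I`,
`-1` on the right half of `I`, `0` off `I`. -/
def haar (I : DyadicI) (t : ℝ) : ℝ :=
  if t ∈ Set.Ico I.lep (I.lep + I.len / 2) then 1
  else if t ∈ Set.Ico (I.lep + I.len / 2) (I.lep + I.len) then -1
  else 0

end DyadicI

open DyadicI

section Defs

variable {X : Type*} [NormedAddCommGroup X] [NormedSpace ℝ X]

/-- The square function `𝕊(f)` of the `X`-valued Haar expansion `f = ∑_{I ∈ s} x_I h_I`: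
`𝕊(f)(t) = (E_ε ‖∑_I ε_I x_I h_I(t)‖²)^{1/2}`, the average being taken over all
choices of signs `ε_I ∈ {±1}`, `I ∈ s`. -/
def sqFn (s : Finset DyadicI) (x : DyadicI → X) (t : ℝ) : ℝ :=
  Real.sqrt ((∑ ε : {I // I ∈ s} → Bool,
    ‖∑ I ∈ s.attach, ((if ε I then (1 : ℝ) else -1) * haar I.1 t) • x I.1‖ ^ 2) /
      2 ^ s.card)

/-- The `H^p_X` (quasi-)norm of `f = ∑_{I ∈ s} x_I h_I`:
`‖f‖ = (∫₀¹ 𝕊(f)(t)^p dt)^{1/p}`. -/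
def HpNormV (p : ℝ) (s : Finset DyadicI) (x : DyadicI → X) : ℝ :=
  (∫ t in Set.Icc (0 : ℝ) 1, sqFn s x t ^ p) ^ (1 / p)

/-- The coefficients of `(T_{τ,p} ⊗ Id_X)(f)` for `f = ∑_{I ∈ s} x_I h_I`, namely
`(T_{τ,p} ⊗ Id_X)(f) = ∑_{I ∈ s} (|I|/|τ(I)|)^{1/p} x_I h_{τ(I)}`, as a family of
coefficients indexed by the Haar support `τ(s)`. -/
def rearrCoef (τ : DyadicI → DyadicI) (p : ℝ) (s : Finset DyadicI) (x : DyadicI → X) :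
    DyadicI → X :=
  fun J => ∑ I ∈ s, if τ I = J then ((len I / len (τ I)) ^ (1 / p)) • x I else 0

/-- The scalar dyadic square function `S(f) = (∑_I a_I² 1_I)^{1/2}`
of `f = ∑_{I ∈ s} a_I h_I`. -/
def sqFnS (s : Finset DyadicI) (a : DyadicI → ℝ) (t : ℝ) : ℝ :=
  Real.sqrt (∑ I ∈ s, a I ^ 2 * Set.indicator (toSet I) (fun _ => (1 : ℝ)) t)

/-- The scalar dyadic `H^p` (quasi-)norm `‖f‖_{H^p} = ‖S(f)‖_{L^p[0,1]}`. -/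
def HpNormS (p : ℝ) (s : Finset DyadicI) (a : DyadicI → ℝ) : ℝ :=
  (∫ t in Set.Icc (0 : ℝ) 1, sqFnS s a t ^ p) ^ (1 / p)

/-- The coefficients of the scalar rearrangement operator `T_{τ,p}` applied to
`f = ∑_{I ∈ s} a_I h_I`; `T_{τ,p}` is determined by
`T_{τ,p}(h_I/|I|^{1/p}) = h_{τ(I)}/|τ(I)|^{1/p}`. -/
def rearrCoefS (τ : DyadicI → DyadicI) (p : ℝ) (s : Finset DyadicI) (a : DyadicI → ℝ) :
    DyadicI → ℝ :=
  fun J => ∑ I ∈ s, if τ I = J then ((len I / len (τ I)) ^ (1 / p)) * a I else 0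

/-- The operator norm `‖T_{τ,p} ⊗ Id_X : H^p_X → H^p_X‖ ∈ [0,∞]`, computed as the
supremum over finitely supported `f` in the unit ball of `H^p_X`. -/
def hpOpNorm (τ : DyadicI → DyadicI) (p : ℝ) (X : Type*) [NormedAddCommGroup X]
    [NormedSpace ℝ X] : ℝ≥0∞ :=
  ⨆ (s : Finset DyadicI) (x : DyadicI → X) (_ : HpNormV p s x ≤ 1),
    ENNReal.ofReal (HpNormV p (s.image τ) (rearrCoef τ p s x))

/-- The scalar operator norm `‖T_{τ,p} : H^p → H^p‖ ∈ [0,∞]`. -/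
def hpOpNormS (τ : DyadicI → DyadicI) (p : ℝ) : ℝ≥0∞ :=
  ⨆ (s : Finset DyadicI) (a : DyadicI → ℝ) (_ : HpNormS p s a ≤ 1),
    ENNReal.ofReal (HpNormS p (s.image τ) (rearrCoefS τ p s a))

/-- For `H = τ(L)` (so that `σ(J) = I` for `J = τ(I)`, `I ∈ L`), the maximal function
`μ_H(t) = sup_{J ∈ H} (|σ(J)|/|J|) 1_J(t) = sup_{I ∈ L} (|I|/|τ(I)|) 1_{τ(I)}(t)`,
as an `[0,∞]`-valued function. -/
def muSet (τ : DyadicI → DyadicI) (L : Set DyadicI) (t : ℝ) : ℝ≥0∞ :=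
  ⨆ (I : DyadicI) (_ : I ∈ L),
    ENNReal.ofReal (len I / len (τ I) * Set.indicator (toSet (τ I)) (fun _ => (1 : ℝ)) t)

/-- For `H = τ(L)` with `L` finite, the (real-valued) maximal function
`μ_H(t) = max_{I ∈ L} (|I|/|τ(I)|) 1_{τ(I)}(t)`. -/
def muFin (τ : DyadicI → DyadicI) (L : Finset DyadicI) (t : ℝ) : ℝ :=
  ((L.sup fun I =>
    Real.toNNReal (len I / len (τ I) * Set.indicator (toSet (τ I)) (fun _ => (1 : ℝ)) t) : ℝ≥0) : ℝ)

/-- The point set `L* = ⋃_{I ∈ L} I` covered by a collection of dyadic intervals. -/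
def pointSet (L : Set DyadicI) : Set ℝ := ⋃ I ∈ L, toSet I

/-- The constant `C₁ = sup_{H ⊆ τ(D), H ≠ ∅} (1/|σ(H)*|) ∫₀¹ μ_H(t) dt`, where
nonempty collections `H ⊆ τ(D)` are parametrized as `H = τ(L)` for nonempty `L ⊆ D`,
so that `σ(H)* = L*`. -/
def Cone (τ : DyadicI → DyadicI) : ℝ≥0∞ :=
  ⨆ (L : Set DyadicI) (_ : L.Nonempty),
    (∫⁻ t in Set.Icc (0 : ℝ) 1, muSet τ L t) / volume (pointSet L)

/-- The square of the dyadic BMO norm of `g = ∑_{J ∈ s} a_J h_J`: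
`‖g‖_{BMO}² = sup_{I ∈ D} (1/|I|) ∑_{J ⊆ I} a_J² |J|`. -/
def bmoSq (s : Finset DyadicI) (a : DyadicI → ℝ) : ℝ≥0∞ :=
  ⨆ I : DyadicI, ENNReal.ofReal
    ((∑ J ∈ s.filter fun J => toSet J ⊆ toSet I, a J ^ 2 * len J) / len I)

/-- The coefficients of `S_σ(g)` for `g = ∑_{J ∈ s} a_J h_J`, where `σ = τ⁻¹` on `τ(D)`:
`S_σ(h_J) = h_{σ(J)}` for `J ∈ τ(D)` and `S_σ(h_J) = 0` otherwise, so that the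
coefficient of `h_K` in `S_σ(g)` is `a_{τ(K)}` if `τ(K) ∈ s`, and `0` otherwise. -/
def sSigmaCoef (τ : DyadicI → DyadicI) (s : Finset DyadicI) (a : DyadicI → ℝ) :
    DyadicI → ℝ :=
  fun K => if τ K ∈ s then a (τ K) else 0

/-- The Haar support of `S_σ(g)` for `g` with Haar support `s`:
`σ(s ∩ τ(D))`, i.e. the preimage under `τ` of `s`. -/
def sSigmaSupp (τ : DyadicI → DyadicI) (s : Finset DyadicI) : Finset DyadicI :=
  (s.filter fun J => J ∈ Set.range τ).image (Function.invFun τ)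

/-- The operator norm `‖S_σ‖_{BMO} ∈ [0,∞]` of `S_σ` with respect to the dyadic BMO
norm, computed over finitely supported Haar expansions. -/
def bmoOpNorm (τ : DyadicI → DyadicI) : ℝ≥0∞ :=
  ⨆ (s : Finset DyadicI) (a : DyadicI → ℝ) (_ : bmoSq s a ≤ 1),
    (bmoSq (sSigmaSupp τ s) (sSigmaCoef τ s a)) ^ (1 / 2 : ℝ)

/-- The Carleson constant `⟦C⟧ = sup_{I ∈ C} (1/|I|) ∑_{J ∈ C, J ⊆ I} |J| ∈ [0,∞]`
of a collection of dyadic intervals. -/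
def carleson (C : Set DyadicI) : ℝ≥0∞ :=
  ⨆ (I : DyadicI) (_ : I ∈ C),
    (∑' J : {J : DyadicI // J ∈ C ∧ toSet J ⊆ toSet I}, ENNReal.ofReal (len J.1)) /
      ENNReal.ofReal (len I)

/-- The `L^p_X = L^p([0,1]; X)` (Bochner) norm of `f = ∑_{I ∈ s} x_I h_I`. -/
def LpNormV (p : ℝ) (s : Finset DyadicI) (x : DyadicI → X) : ℝ :=
  (∫ t in Set.Icc (0 : ℝ) 1, ‖∑ I ∈ s, haar I t • x I‖ ^ p) ^ (1 / p)

/-- The operator norm `‖T_{τ,p} ⊗ Id_X : L^p_X → L^p_X‖ ∈ [0,∞]`, computed over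
finitely supported Haar expansions. -/
def lpOpNorm (τ : DyadicI → DyadicI) (p : ℝ) (X : Type*) [NormedAddCommGroup X]
    [NormedSpace ℝ X] : ℝ≥0∞ :=
  ⨆ (s : Finset DyadicI) (x : DyadicI → X) (_ : LpNormV p s x ≤ 1),
    ENNReal.ofReal (LpNormV p (s.image τ) (rearrCoef τ p s x))

/-- The operator norm `‖T_{τ,p}^{-1} ⊗ Id_X‖ ∈ [0,∞]` on the span of
`{h_J : J ∈ τ(D)}` with the `L^p_X` norm: the map determined by
`x h_{τ(I)}/|τ(I)|^{1/p} ↦ x h_I/|I|^{1/p}`, i.e. sending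
`g = ∑_{I ∈ L} x_I h_{τ(I)}` to `∑_{I ∈ L} (|τ(I)|/|I|)^{1/p} x_I h_I`. -/
def lpInvOpNorm (τ : DyadicI → DyadicI) (p : ℝ) (X : Type*) [NormedAddCommGroup X]
    [NormedSpace ℝ X] : ℝ≥0∞ :=
  ⨆ (L : Finset DyadicI) (x : DyadicI → X)
    (_ : LpNormV p (L.image τ) (fun J => ∑ I ∈ L, if τ I = J then x I else 0) ≤ 1),
    ENNReal.ofReal (LpNormV p L fun I => ((len (τ I) / len I) ^ (1 / p)) • x I)

/-- The operator norm `‖T_{τ,1}^{-1}‖₁ ∈ [0,∞]` on the span of `{h_J : J ∈ τ(D)}`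
with the dyadic `H¹` norm: the map determined by `h_{τ(I)}/|τ(I)| ↦ h_I/|I|`,
i.e. sending `g = ∑_{I ∈ L} a_I h_{τ(I)}` to `∑_{I ∈ L} (|τ(I)|/|I|) a_I h_I`. -/
def h1InvOpNorm (τ : DyadicI → DyadicI) : ℝ≥0∞ :=
  ⨆ (L : Finset DyadicI) (a : DyadicI → ℝ)
    (_ : HpNormS 1 (L.image τ) (fun J => ∑ I ∈ L, if τ I = J then a I else 0) ≤ 1),
    ENNReal.ofReal (HpNormS 1 L fun I => (len (τ I) / len I) * a I)

/-- The Rademacher average `(E_ε ‖∑_{i<n} ε_i a_i‖^p)^{1/p}` over all choices of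
signs `ε_i ∈ {±1}`. -/
def radAvg (p : ℝ) {Y : Type*} [NormedAddCommGroup Y] [NormedSpace ℝ Y] (n : ℕ)
    (a : Fin n → Y) : ℝ :=
  ((∑ ε : Fin n → Bool, ‖∑ i, (if ε i then (1 : ℝ) else -1) • a i‖ ^ p) / 2 ^ n) ^ (1 / p)

/-- The type-`p` constant `Type_p(Y) ∈ [0,∞]`: the least `C` such that
`(E_ε ‖∑ ε_i a_i‖^p)^{1/p} ≤ C (∑ ‖a_i‖^p)^{1/p}` for all finite families in `Y`. -/
def typeConst (p : ℝ) (Y : Type*) [NormedAddCommGroup Y] [NormedSpace ℝ Y] : ℝ≥0∞ :=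
  sInf {C : ℝ≥0∞ | ∀ (n : ℕ) (a : Fin n → Y),
    ENNReal.ofReal (radAvg p n a) ≤ C * ENNReal.ofReal ((∑ i, ‖a i‖ ^ p) ^ (1 / p))}

/-- The UMD property of a Banach space `E`: for each `1 < r < ∞` the Haar system is
unconditional in `L^r_E`. -/
def IsUMD (E : Type*) [NormedAddCommGroup E] [NormedSpace ℝ E] : Prop :=
  ∀ r : ℝ, 1 < r → ∃ β : ℝ, ∀ (s : Finset DyadicI) (x : DyadicI → E) (ε : DyadicI → ℝ),
    (∀ I, ε I = 1 ∨ ε I = -1) →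
    LpNormV r s (fun I => ε I • x I) ≤ β * LpNormV r s x

/-- `B` is a block in `L` with top `I`: `B ⊆ L`, `I` is the unique maximal interval
of `B`, and `B` is order-convex in `L` between its elements and `I`. -/
def IsBlock (L : Set DyadicI) (B : Set DyadicI) (I : DyadicI) : Prop :=
  B ⊆ L ∧ I ∈ B ∧ (∀ J ∈ B, toSet J ⊆ toSet I) ∧
    ∀ J ∈ B, ∀ K ∈ L, toSet J ⊆ toSet K → toSet K ⊆ toSet I → K ∈ B

/-- `G₁(K | E)`: the maximal dyadic intervals of `E` strictly contained in `K`. -/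
def gen1 (K : DyadicI) (E : Set DyadicI) : Set DyadicI :=
  {J | J ∈ E ∧ toSet J ⊂ toSet K ∧
    ∀ J' ∈ E, toSet J' ⊂ toSet K → toSet J ⊆ toSet J' → J' = J}

end Defs


lemma len_pos (I : DyadicI) : 0 < I.len := by unfold len; positivity

lemma mem_iff_floor (I : DyadicI) (t : ℝ) : t ∈ I.toSet ↔ ⌊t * 2 ^ I.n⌋ = (I.k : ℤ) := by
  have h2 : (0:ℝ) < 2 ^ I.n := by positivity
  have hl : I.len = 1 / 2 ^ I.n := by simp [len]
  rw [Int.floor_eq_iff]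
  simp only [toSet, lep, hl, Set.mem_Ico, Int.cast_natCast]
  rw [show (I.k:ℝ) * (1 / 2 ^ I.n) = I.k / 2 ^ I.n by ring, ← add_div, div_le_iff₀ h2, lt_div_iff₀ h2]

lemma floor_coarse {n m : ℕ} (h : n ≤ m) {t t' : ℝ} (ht : ⌊t * 2 ^ m⌋ = ⌊t' * 2 ^ m⌋) :
    ⌊t * 2 ^ n⌋ = ⌊t' * 2 ^ n⌋ := by
  obtain ⟨d, rfl⟩ := Nat.exists_eq_add_of_le h
  have key : ∀ u : ℝ, ⌊u * 2 ^ n⌋ = ⌊u * 2 ^ (n + d)⌋ / ((2 ^ d : ℕ) : ℤ) := by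
    intro u
    rw [← Int.floor_div_natCast]
    congr 1
    push_cast
    rw [pow_add]
    field_simp
  rw [key, key, ht]

lemma same_floor {K : DyadicI} {t t' : ℝ} (h : t ∈ K.toSet) (h' : t' ∈ K.toSet) :
    ⌊t * 2 ^ K.n⌋ = ⌊t' * 2 ^ K.n⌋ := by
  rw [mem_iff_floor] at h h'
  rw [h, h']

lemma dy_subset {J K : DyadicI} (hn : J.n ≤ K.n) {t : ℝ} (hJ : t ∈ J.toSet) (hK : t ∈ K.toSet) :
    K.toSet ⊆ J.toSet := by
  intro t' ht'
  rw [mem_iff_floor] at hJ ⊢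
  rw [← hJ]
  exact floor_coarse hn (same_floor ht' hK)

lemma dy_eq {J K : DyadicI} (hn : J.n = K.n) {t : ℝ} (hJ : t ∈ J.toSet) (hK : t ∈ K.toSet) :
    J = K := by
  rw [mem_iff_floor] at hJ hK
  rw [hn] at hJ
  have : J.k = K.k := by exact_mod_cast hJ.symm.trans hK
  cases J; cases K; simp_all

lemma lep_mem (I : DyadicI) : I.lep ∈ I.toSet := by
  simp [toSet, len_pos]

lemma haar_left_iff (I : DyadicI) (t : ℝ) :
    t ∈ Set.Ico I.lep (I.lep + I.len / 2) ↔ ⌊t * 2 ^ (I.n + 1)⌋ = 2 * (I.k : ℤ) := by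
  have h2 : (0:ℝ) < 2 ^ I.n := by positivity
  have hl : I.len = 1 / 2 ^ I.n := by simp [len]
  rw [Int.floor_eq_iff]
  simp only [lep, hl, Set.mem_Ico]
  rw [show (I.k:ℝ) * (1 / 2 ^ I.n) + 1 / 2 ^ I.n / 2 = (I.k + 1/2) / 2 ^ I.n by ring,
    show (I.k:ℝ) * (1 / 2 ^ I.n) = I.k / 2 ^ I.n by ring, div_le_iff₀ h2, lt_div_iff₀ h2, pow_succ]
  push_cast
  constructor <;> rintro ⟨a, b⟩ <;> constructor <;> linarith

lemma haar_right_iff (I : DyadicI) (t : ℝ) :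
    t ∈ Set.Ico (I.lep + I.len / 2) (I.lep + I.len) ↔ ⌊t * 2 ^ (I.n + 1)⌋ = 2 * (I.k : ℤ) + 1 := by
  have h2 : (0:ℝ) < 2 ^ I.n := by positivity
  have hl : I.len = 1 / 2 ^ I.n := by simp [len]
  rw [Int.floor_eq_iff]
  simp only [lep, hl, Set.mem_Ico]
  rw [show (I.k:ℝ) * (1 / 2 ^ I.n) + 1 / 2 ^ I.n / 2 = (I.k + 1/2) / 2 ^ I.n by ring,
    show (I.k:ℝ) * (1 / 2 ^ I.n) + 1 / 2 ^ I.n = (I.k + 1) / 2 ^ I.n by ring, div_le_iff₀ h2, lt_div_iff₀ h2, pow_succ]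
  push_cast
  constructor <;> rintro ⟨a, b⟩ <;> constructor <;> linarith

lemma haar_const {J K : DyadicI} (hn : J.n < K.n) {t t' : ℝ} (h : t ∈ K.toSet) (h' : t' ∈ K.toSet) :
    haar J t = haar J t' := by
  have := floor_coarse (Nat.succ_le_of_lt hn) (same_floor h h')
  unfold haar
  simp only [haar_left_iff, haar_right_iff]
  rw [this]

lemma haar_zero {J : DyadicI} {t : ℝ} (h : t ∉ J.toSet) : haar J t = 0 := by
  have := len_pos J
  unfold haar
  simp only [toSet, Set.mem_Ico, not_and, not_lt] at h ⊢
  rw [if_neg, if_neg]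
  · rintro ⟨a, b⟩; linarith [h (by linarith)]
  · rintro ⟨a, b⟩; linarith [h (by linarith)]

lemma abs_haar_le (J : DyadicI) (t : ℝ) : |haar J t| ≤ 1 := by
  unfold haar; split_ifs <;> simp

lemma measurable_haar (J : DyadicI) : Measurable (haar J) := by
  unfold haar
  exact Measurable.ite measurableSet_Ico measurable_const
    (Measurable.ite measurableSet_Ico measurable_const measurable_const)

lemma measurableSet_dy (J : DyadicI) : MeasurableSet J.toSet := measurableSet_Ico

lemma vol_dy (J : DyadicI) : (volume.restrict (Set.Icc (0:ℝ) 1)) J.toSet = ENNReal.ofReal J.len := by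
  have h2 : (0:ℝ) < 2 ^ J.n := by positivity
  have hl : J.len = 1 / 2 ^ J.n := by simp [len]
  rw [Measure.restrict_apply (measurableSet_dy J), Set.inter_eq_left.2]
  · simp [toSet]
  · intro t ht
    simp only [toSet, lep, Set.mem_Ico, Set.mem_Icc] at ht ⊢
    have hk : (J.k:ℝ) + 1 ≤ 2 ^ J.n := by exact_mod_cast J.hk
    have := len_pos J
    constructor
    · have : 0 ≤ (J.k:ℝ) * J.len := by positivity
      linarith
    · have : ((J.k:ℝ) + 1) * J.len ≤ 2 ^ J.n * J.len := by gcongr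
      have e : 2 ^ J.n * J.len = 1 := by rw [hl]; field_simp
      linarith

/-- signs -/
def sg {s : Finset DyadicI} (ε : {I // I ∈ s} → Bool) (I : DyadicI) : ℝ :=
  if h : I ∈ s then (if ε ⟨I, h⟩ then 1 else -1) else 0

section
variable {X : Type*} [NormedAddCommGroup X] [NormedSpace ℝ X]

lemma sqFn_eq (s : Finset DyadicI) (x : DyadicI → X) (t : ℝ) :
    sqFn s x t = Real.sqrt ((∑ ε : {I // I ∈ s} → Bool,
      ‖∑ I ∈ s, (sg ε I * haar I t) • x I‖ ^ 2) / 2 ^ s.card) := by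
  unfold sqFn
  congr 2
  refine Finset.sum_congr rfl fun ε _ => ?_
  congr 2
  rw [← Finset.sum_attach s]
  refine Finset.sum_congr rfl fun I _ => ?_
  simp [sg]

lemma sqFn_sub (s B : Finset DyadicI) (hB : B ⊆ s) (x : DyadicI → X) (t : ℝ) :
    sqFn B x t = Real.sqrt ((∑ ε : {I // I ∈ s} → Bool,
      ‖∑ I ∈ B, (sg ε I * haar I t) • x I‖ ^ 2) / 2 ^ s.card) := by
  obtain ⟨R, hR, rfl⟩ : ∃ R, Disjoint B R ∧ B ∪ R = s :=
    ⟨s \ B, Finset.disjoint_sdiff, Finset.union_sdiff_of_subset hB⟩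
  rw [sqFn_eq]
  congr 1
  rw [← (Equiv.piFinsetUnion (fun _ => Bool) hR).sum_comp, Fintype.sum_prod_type]
  have : ∀ (a : {I // I ∈ B} → Bool) (b : {I // I ∈ R} → Bool),
      ‖∑ I ∈ B, (sg (Equiv.piFinsetUnion (fun _ => Bool) hR (a, b)) I * haar I t) • x I‖ ^ 2
      = ‖∑ I ∈ B, (sg a I * haar I t) • x I‖ ^ 2 := by
    intro a b
    congr 2
    refine Finset.sum_congr rfl fun I hI => ?_
    congr 2
    simp only [sg, hI, Finset.mem_union, true_or, dif_pos]
    congr 2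
    exact Equiv.piFinsetUnion_left (fun _ => Bool) hR hI _
  simp only [this, Finset.sum_const, Finset.card_univ, Fintype.card_fun,
    Fintype.card_bool, Fintype.card_coe, nsmul_eq_mul]
  rw [Finset.card_union_of_disjoint hR, ← Finset.mul_sum, pow_add]
  push_cast
  field_simp

lemma l2_tri {ι κ : Type*} [Fintype ι] (E : Finset κ) (F : κ → ι → X) :
    Real.sqrt (∑ i, ‖∑ k ∈ E, F k i‖ ^ 2) ≤ ∑ k ∈ E, Real.sqrt (∑ i, ‖F k i‖ ^ 2) := by
  have := norm_sum_le E (fun k => (WithLp.toLp 2 (F k) : PiLp 2 (fun _ : ι => X)))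
  simp only [PiLp.norm_eq_of_L2] at this
  simpa using this

lemma sqFn_nonneg (s : Finset DyadicI) (x : DyadicI → X) (t : ℝ) : 0 ≤ sqFn s x t :=
  Real.sqrt_nonneg _

lemma sqFn_tri (s E : Finset DyadicI) (B : DyadicI → Finset DyadicI) (x : DyadicI → X)
    (hd : ∀ I ∈ E, ∀ I' ∈ E, I ≠ I' → Disjoint (B I) (B I'))
    (hs : ∀ J, J ∈ s ↔ ∃ I ∈ E, J ∈ B I) (t : ℝ) :
    sqFn s x t ≤ ∑ I ∈ E, sqFn (B I) x t := by
  have hsB : s = E.biUnion B := by ext J; simp [hs]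
  have h1 : ∀ I ∈ E, sqFn (B I) x t = Real.sqrt (∑ ε : {I // I ∈ s} → Bool,
      ‖∑ J ∈ B I, (sg ε J * haar J t) • x J‖ ^ 2) / Real.sqrt (2 ^ s.card) := by
    intro I hI
    rw [sqFn_sub s (B I) (fun J hJ => (hs J).2 ⟨I, hI, hJ⟩), Real.sqrt_div' _ (by positivity)]
  rw [Finset.sum_congr rfl h1, ← Finset.sum_div, sqFn_eq, Real.sqrt_div' _ (by positivity)]
  gcongr
  refine le_trans (le_of_eq ?_) (l2_tri E _)
  congr 1
  refine Finset.sum_congr rfl fun ε _ => ?_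
  congr 2
  rw [← Finset.sum_biUnion (fun I hI I' hI' h => hd I hI I' hI' h), ← hsB]

lemma sqFn_congr (s : Finset DyadicI) (x : DyadicI → X) (t t' : ℝ)
    (h : ∀ J ∈ s, haar J t = haar J t') : sqFn s x t = sqFn s x t' := by
  rw [sqFn_eq, sqFn_eq]
  congr 2
  refine Finset.sum_congr rfl fun ε _ => ?_
  congr 2
  exact Finset.sum_congr rfl fun J hJ => by rw [h J hJ]

lemma sqFn_zero (s : Finset DyadicI) (x : DyadicI → X) (t : ℝ)
    (h : ∀ J ∈ s, haar J t = 0) : sqFn s x t = 0 := by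
  rw [sqFn_eq]
  have : ∀ ε : {I // I ∈ s} → Bool, ∑ I ∈ s, (sg ε I * haar I t) • x I = 0 := by
    intro ε
    exact Finset.sum_eq_zero fun J hJ => by rw [h J hJ]; simp
  simp [this]

lemma measurable_sqFn (s : Finset DyadicI) (x : DyadicI → X) : Measurable (sqFn s x) := by
  have : sqFn s x = fun t => Real.sqrt ((∑ ε : {I // I ∈ s} → Bool,
      ‖∑ I ∈ s, (sg ε I * haar I t) • x I‖ ^ 2) / 2 ^ s.card) := by
    funext t; exact sqFn_eq s x t
  rw [this]
  refine Measurable.sqrt (Measurable.div_const (Finset.measurable_sum _ fun ε _ => ?_) _)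
  refine Measurable.pow_const (StronglyMeasurable.norm ?_).measurable _
  refine Finset.stronglyMeasurable_fun_sum _ fun I _ => ?_
  exact ((measurable_haar I).const_mul _).stronglyMeasurable.smul_const _

lemma sqFn_le (s : Finset DyadicI) (x : DyadicI → X) (t : ℝ) :
    sqFn s x t ≤ ∑ I ∈ s, ‖x I‖ := by
  rw [sqFn_eq]
  refine Real.sqrt_le_iff.2 ⟨by positivity, ?_⟩
  rw [div_le_iff₀ (by positivity)]
  have : ∀ ε : {I // I ∈ s} → Bool, ‖∑ I ∈ s, (sg ε I * haar I t) • x I‖ ^ 2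
      ≤ (∑ I ∈ s, ‖x I‖) ^ 2 := by
    intro ε
    gcongr
    refine (norm_sum_le _ _).trans (Finset.sum_le_sum fun I _ => ?_)
    rw [norm_smul, Real.norm_eq_abs, abs_mul]
    have h1 : |sg ε I| ≤ 1 := by unfold sg; split_ifs <;> simp
    have h2 := abs_haar_le I t
    have : |sg ε I| * |haar I t| ≤ 1 := mul_le_one₀ h1 (abs_nonneg _) h2
    exact mul_le_of_le_one_left (norm_nonneg _) this
  refine (Finset.sum_le_sum fun ε _ => this ε).trans ?_
  simp [mul_comm]

lemma integrable_sqFn (p : ℝ) (hp : 1 ≤ p) (s : Finset DyadicI) (x : DyadicI → X) :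
    Integrable (fun t => sqFn s x t ^ p) (volume.restrict (Set.Icc (0:ℝ) 1)) := by
  refine Integrable.of_bound ((measurable_sqFn s x).pow_const p).aestronglyMeasurable
    ((∑ I ∈ s, ‖x I‖) ^ p) (Filter.Eventually.of_forall fun t => ?_)
  have h0 := sqFn_nonneg s x t
  rw [Real.norm_of_nonneg (by positivity)]
  exact Real.rpow_le_rpow h0 (sqFn_le s x t) (by linarith)

lemma ofReal_HpNorm (p : ℝ) (hp : 1 ≤ p) (s : Finset DyadicI) (x : DyadicI → X) :
    ENNReal.ofReal (HpNormV p s x ^ p) =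
      ∫⁻ t in Set.Icc (0:ℝ) 1, ENNReal.ofReal (sqFn s x t ^ p) := by
  have h0 : ∀ t, 0 ≤ sqFn s x t ^ p := fun t => Real.rpow_nonneg (sqFn_nonneg s x t) _
  unfold HpNormV
  rw [← Real.rpow_mul (integral_nonneg h0), one_div_mul_cancel (by linarith), Real.rpow_one,
    ofReal_integral_eq_lintegral_ofReal (integrable_sqFn p hp s x) (Filter.Eventually.of_forall h0)]

end

lemma add_rpow_le (p : ℝ) (hp : 1 ≤ p) : ∃ C : ℝ, 0 < C ∧ ∀ a b : ℝ, 0 ≤ a → 0 ≤ b →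
    (a + b) ^ p ≤ (9/8) * a ^ p + C * b ^ p := by
  have hp0 : 0 < p := by linarith
  set θ : ℝ := (9/8 : ℝ) ^ (-(1/p)) with hθ
  have hθ0 : 0 < θ := by positivity
  have hθ1 : θ < 1 := Real.rpow_lt_one_of_one_lt_of_neg (by norm_num) (by simp; exact hp0)
  have h1θ : 0 < 1 - θ := by linarith
  refine ⟨(1-θ) * (1/(1 - θ)) ^ p, by positivity, fun a b ha hb => ?_⟩
  have hc := (convexOn_rpow hp).2 (x := a/θ) (y := b/(1-θ)) (by simp; positivity) (by simp; positivity)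
    hθ0.le h1θ.le (by ring)
  simp only [smul_eq_mul] at hc
  rw [mul_div_cancel₀ _ hθ0.ne', mul_div_cancel₀ _ h1θ.ne'] at hc
  rw [Real.div_rpow ha hθ0.le, Real.div_rpow hb h1θ.le] at hc
  rw [Real.div_rpow zero_le_one h1θ.le, Real.one_rpow]
  refine hc.trans (add_le_add ?_ (le_of_eq (by ring)))
  have : θ / θ ^ p ≤ 9/8 := by
    have : θ ^ p = (9/8 : ℝ)⁻¹ := by
      rw [hθ, ← Real.rpow_mul (by norm_num), show -(1/p) * p = -1 by field_simp, Real.rpow_neg_one]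
    rw [this]; norm_num; linarith
  calc θ * (a ^ p / θ ^ p) = θ / θ ^ p * a ^ p := by ring
    _ ≤ _ := by gcongr

lemma card_insert_max (A : Finset DyadicI) (a : DyadicI) (ha : a ∉ A)
    (hm : ∀ I ∈ A, I.n < a.n) (I : DyadicI) (hI : I ∈ A) :
    ((insert a A).filter fun K => I.n < K.n).card = (A.filter fun K => I.n < K.n).card + 1 := by
  rw [Finset.filter_insert, if_pos (hm I hI), Finset.card_insert_of_notMem]
  simp [ha]

lemma card_insert_max' (A : Finset DyadicI) (a : DyadicI)
    (hm : ∀ I ∈ A, I.n < a.n) :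
    ((insert a A).filter fun K => a.n < K.n).card = 0 := by
  rw [Finset.card_eq_zero, Finset.filter_eq_empty_iff]
  intro K hK
  rcases Finset.mem_insert.1 hK with rfl | h
  · simp
  · simp [(hm K h).le]

lemma chain_ind (P : Finset DyadicI → Prop) (h0 : P ∅)
    (h1 : ∀ A a, a ∉ A → (∀ I ∈ A, I.n < a.n) → P A → P (insert a A))
    (A : Finset DyadicI) (hA : Set.InjOn DyadicI.n (A : Set DyadicI)) : P A := by
  induction A using Finset.induction_on_max_value DyadicI.n with
  | empty => exact h0
  | insert a A ha hm ih =>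
    refine h1 A a ha (fun I hI => lt_of_le_of_ne (hm I hI) fun h => ha ?_)
      (ih (hA.mono (by simp)))
    rw [← hA (by simp [hI]) (by simp) h]; exact hI

lemma chain_pow (p C : ℝ) (hp : 1 ≤ p)
    (hC : ∀ a b : ℝ, 0 ≤ a → 0 ≤ b → (a + b) ^ p ≤ (9/8) * a ^ p + C * b ^ p)
    (g : DyadicI → ℝ) (hg : ∀ I, 0 ≤ g I)
    (A : Finset DyadicI) (hA : Set.InjOn DyadicI.n (A : Set DyadicI)) :
    (∑ I ∈ A, g I) ^ p ≤
      C * ∑ I ∈ A, (9/8 : ℝ) ^ ((A.filter fun K => I.n < K.n).card) * g I ^ p := by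
  refine chain_ind (fun A => (∑ I ∈ A, g I) ^ p ≤
      C * ∑ I ∈ A, (9/8 : ℝ) ^ ((A.filter fun K => I.n < K.n).card) * g I ^ p) ?_ ?_ A hA
  · simp [Real.zero_rpow (by linarith : p ≠ 0)]
  · intro A a ha hm ih
    rw [Finset.sum_insert ha, Finset.sum_insert ha, card_insert_max' A a hm, add_comm (g a)]
    refine (hC _ _ (Finset.sum_nonneg fun I _ => hg I) (hg a)).trans ?_
    have : ∑ I ∈ A, (9/8 : ℝ) ^ (((insert a A).filter fun K => I.n < K.n).card) * g I ^ p
        = 9/8 * ∑ I ∈ A, (9/8 : ℝ) ^ ((A.filter fun K => I.n < K.n).card) * g I ^ p := by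
      rw [Finset.mul_sum]
      refine Finset.sum_congr rfl fun I hI => ?_
      rw [card_insert_max A a ha hm I hI, pow_succ]; ring
    rw [this]
    linarith

lemma chain_tele (c : ℝ≥0∞) (A : Finset DyadicI) (hA : Set.InjOn DyadicI.n (A : Set DyadicI)) :
    (1 + c) ^ A.card = 1 + c * ∑ I ∈ A, (1 + c) ^ ((A.filter fun K => I.n < K.n).card) := by
  refine chain_ind (fun A => (1 + c) ^ A.card =
      1 + c * ∑ I ∈ A, (1 + c) ^ ((A.filter fun K => I.n < K.n).card)) (by simp) ?_ A hA
  intro A a ha hm ih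
  rw [Finset.sum_insert ha, card_insert_max' A a hm, Finset.card_insert_of_notMem ha, pow_succ, ih]
  have : ∑ I ∈ A, (1 + c) ^ (((insert a A).filter fun K => I.n < K.n).card)
      = (∑ I ∈ A, (1 + c) ^ ((A.filter fun K => I.n < K.n).card)) * (1 + c) := by
    rw [Finset.sum_mul]
    refine Finset.sum_congr rfl fun I hI => ?_
    rw [card_insert_max A a ha hm I hI, pow_succ]
  rw [this]
  ring

/-- counting function -/
def cnt (E : Finset DyadicI) (I : DyadicI) (t : ℝ) : ℕ :=
  (E.filter fun K => I.n < K.n ∧ t ∈ K.toSet).card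

lemma injOn_chain (E : Finset DyadicI) (P : DyadicI → Prop) [DecidablePred P] (t : ℝ)
    (hP : ∀ K, P K → t ∈ K.toSet) :
    Set.InjOn DyadicI.n ((E.filter P : Finset DyadicI) : Set DyadicI) := by
  intro J hJ K hK h
  simp only [Finset.coe_filter, Set.mem_setOf_eq] at hJ hK
  exact dy_eq h (hP J hJ.2) (hP K hK.2)

lemma cnt_eq_card (E : Finset DyadicI) (I : DyadicI) (t : ℝ) :
    ((E.filter fun K => t ∈ K.toSet).filter fun K => I.n < K.n).card = cnt E I t := by
  unfold cnt
  rw [Finset.filter_filter]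
  congr 1
  ext K
  simp only [Finset.mem_filter]
  tauto

lemma measurable_cnt (E : Finset DyadicI) (I : DyadicI) : Measurable (cnt E I) := by
  have : cnt E I = fun t => ∑ K ∈ E, if I.n < K.n ∧ t ∈ K.toSet then 1 else 0 := by
    funext t
    rw [cnt, Finset.card_filter]
  rw [this]
  refine Finset.measurable_sum _ fun K _ => ?_
  refine Measurable.ite ?_ measurable_const measurable_const
  by_cases h : I.n < K.n
  · simpa [h] using measurableSet_dy K
  · simp [h]

lemma measurable_pow_cnt (E : Finset DyadicI) (I : DyadicI) (L : ℝ≥0∞) :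
    Measurable fun t => L ^ cnt E I t :=
  (measurable_from_nat (f := fun n : ℕ => L ^ n)).comp (measurable_cnt E I)

lemma cnt_tele (E : Finset DyadicI) (I : DyadicI) (t : ℝ) (c : ℝ≥0∞) :
    (1 + c) ^ cnt E I t = 1 + c * ∑ K ∈ E, if I.n < K.n ∧ t ∈ K.toSet then
      (1 + c) ^ cnt E K t else 0 := by
  rw [cnt, chain_tele c (E.filter fun K => I.n < K.n ∧ t ∈ K.toSet)
    (injOn_chain E _ t fun K h => h.2), ← Finset.sum_filter]
  congr 2
  refine Finset.sum_congr rfl fun K hK => ?_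
  simp only [Finset.mem_filter] at hK
  congr 1
  unfold cnt
  rw [Finset.filter_filter]
  congr 1
  ext J
  simp only [Finset.mem_filter]
  constructor
  · rintro ⟨a, b, c⟩; exact ⟨a, c, b.2⟩
  · rintro ⟨a, b, c⟩; exact ⟨a, ⟨hK.2.1.trans b, c⟩, b⟩

lemma carl_sum (E : Finset DyadicI) (h : carleson (↑E) ≤ 4) (J : DyadicI) (hJ : J ∈ E) :
    ∑ K ∈ E.filter (fun K => K.toSet ⊆ J.toSet), ENNReal.ofReal K.len
      ≤ 4 * ENNReal.ofReal J.len := by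
  have h1 := (le_iSup₂ (f := fun (I : DyadicI) (_ : I ∈ (E : Set DyadicI)) =>
    (∑' J : {J : DyadicI // J ∈ (E : Set DyadicI) ∧ toSet J ⊆ toSet I}, ENNReal.ofReal (len J.1)) /
      ENNReal.ofReal (len I)) J hJ).trans h
  have hpos : ENNReal.ofReal J.len ≠ 0 := by simp [len_pos]
  rw [ENNReal.div_le_iff hpos ENNReal.ofReal_ne_top] at h1
  refine le_trans ?_ h1
  have e := tsum_subtype {K : DyadicI | K ∈ (E : Set DyadicI) ∧ toSet K ⊆ toSet J}
    (fun K => ENNReal.ofReal K.len)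
  refine le_trans ?_ (le_of_eq e.symm)
  refine le_trans (le_of_eq ?_) (ENNReal.sum_le_tsum (E.filter (fun K => K.toSet ⊆ J.toSet)))
  refine Finset.sum_congr rfl fun K hK => ?_
  rw [Set.indicator_of_mem]
  simpa using hK


lemma exp_bound (E : Finset DyadicI) (h : carleson (↑E) ≤ 4) (J : DyadicI) (hJ : J ∈ E) :
    ∫⁻ t in J.toSet, (1 + 8⁻¹ : ℝ≥0∞) ^ cnt E J t ∂(volume.restrict (Set.Icc (0:ℝ) 1)) ≤ 2 * ENNReal.ofReal J.len := by
  have main : ∀ d : ℕ, ∀ J ∈ E, E.sup DyadicI.n < J.n + d →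
      ∫⁻ t in J.toSet, (1 + 8⁻¹ : ℝ≥0∞) ^ cnt E J t ∂(volume.restrict (Set.Icc (0:ℝ) 1)) ≤ 2 * ENNReal.ofReal J.len := by
    intro d
    induction d with
    | zero =>
      intro J hJ hlt
      have := Finset.le_sup (f := DyadicI.n) hJ
      omega
    | succ d ih =>
      intro J hJ hlt
      have hpt : ∀ t ∈ J.toSet, (1 + 8⁻¹ : ℝ≥0∞) ^ cnt E J t ≤
          1 + 8⁻¹ * ∑ K ∈ E.filter (fun K => J.n < K.n ∧ K.toSet ⊆ J.toSet),
            K.toSet.indicator (fun t => (1 + 8⁻¹ : ℝ≥0∞) ^ cnt E K t) t := by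
        intro t ht
        rw [cnt_tele]
        gcongr
        rw [Finset.sum_filter]
        refine Finset.sum_le_sum fun K hK => ?_
        by_cases h1 : J.n < K.n ∧ t ∈ K.toSet
        · rw [if_pos h1, if_pos ⟨h1.1, dy_subset h1.1.le ht h1.2⟩, Set.indicator_of_mem h1.2]
        · rw [if_neg h1]; exact zero_le
      refine (setLIntegral_mono' (measurableSet_dy J) hpt).trans ?_
      have hm : ∀ K : DyadicI, Measurable
          (K.toSet.indicator (fun t => (1 + 8⁻¹ : ℝ≥0∞) ^ cnt E K t)) := fun K =>
        (measurable_pow_cnt E K _).indicator (measurableSet_dy K)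
      rw [lintegral_add_left measurable_const,
        lintegral_const_mul _ (Finset.measurable_fun_sum _ fun K _ => hm K),
        lintegral_finsetSum _ fun K _ => hm K]
      have hb : ∑ K ∈ E.filter (fun K => J.n < K.n ∧ K.toSet ⊆ J.toSet),
          ∫⁻ t in J.toSet, K.toSet.indicator (fun t => (1 + 8⁻¹ : ℝ≥0∞) ^ cnt E K t) t ∂(volume.restrict (Set.Icc (0:ℝ) 1))
          ≤ 2 * (4 * ENNReal.ofReal J.len) := by
        calc _ ≤ ∑ K ∈ E.filter (fun K => J.n < K.n ∧ K.toSet ⊆ J.toSet),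
              2 * ENNReal.ofReal K.len := by
              refine Finset.sum_le_sum fun K hK => ?_
              simp only [Finset.mem_filter] at hK
              refine (setLIntegral_le_lintegral _ _).trans ?_
              rw [lintegral_indicator (measurableSet_dy K)]
              exact ih K hK.1 (by omega)
          _ ≤ ∑ K ∈ E.filter (fun K => K.toSet ⊆ J.toSet), 2 * ENNReal.ofReal K.len := by
              refine Finset.sum_le_sum_of_subset fun K hK => ?_
              simp only [Finset.mem_filter] at hK ⊢
              exact ⟨hK.1, hK.2.2⟩
          _ ≤ _ := by
              rw [← Finset.mul_sum]
              gcongr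
              exact carl_sum E h J hJ
      have h1 : ∫⁻ _ in J.toSet, (1:ℝ≥0∞) ∂(volume.restrict (Set.Icc (0:ℝ) 1)) = ENNReal.ofReal J.len := by
        rw [setLIntegral_one, vol_dy]
      rw [h1]
      calc _ ≤ ENNReal.ofReal J.len + 8⁻¹ * (2 * (4 * ENNReal.ofReal J.len)) := by gcongr
        _ = ENNReal.ofReal J.len + (8⁻¹ * 8) * ENNReal.ofReal J.len := by ring
        _ = _ := by
          rw [ENNReal.inv_mul_cancel (by norm_num) (by norm_num)]; ring
  exact main (E.sup DyadicI.n + 1) J hJ (by omega)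

/-- maximal intervals of `E` below `I` -/
def mx (E : Finset DyadicI) (I : DyadicI) : Finset DyadicI :=
  E.filter fun K => I.n < K.n ∧ K.toSet ⊆ I.toSet ∧
    ∀ J ∈ E, I.n < J.n → K.toSet ⊆ J.toSet → J.n < K.n → False

lemma mx_disj (E : Finset DyadicI) (I : DyadicI) :
    Set.PairwiseDisjoint (mx E I : Set DyadicI) DyadicI.toSet := by
  intro K hK K' hK' hne
  refine Set.disjoint_left.2 fun t ht ht' => hne ?_
  simp only [mx, Finset.coe_filter, Set.mem_setOf_eq] at hK hK'
  rcases lt_trichotomy K.n K'.n with h | h | h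
  · exact (hK'.2.2.2 K hK.1 hK.2.1 (dy_subset h.le ht ht') h).elim
  · exact dy_eq h ht ht'
  · exact (hK.2.2.2 K' hK'.1 hK'.2.1 (dy_subset h.le ht' ht) h).elim

lemma cnt_le_mx (E : Finset DyadicI) (I : DyadicI) (t : ℝ) (ht : t ∈ I.toSet) (L : ℝ≥0∞) :
    L ^ cnt E I t ≤ 1 + ∑ K ∈ mx E I, K.toSet.indicator (fun t => L * L ^ cnt E K t) t := by
  by_cases h0 : cnt E I t = 0
  · rw [h0, pow_zero]; exact le_self_add
  · have hne : (E.filter fun K => I.n < K.n ∧ t ∈ K.toSet).Nonempty :=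
      Finset.card_pos.1 (Nat.pos_of_ne_zero h0)
    obtain ⟨K, hK, hmin⟩ := Finset.exists_min_image _ DyadicI.n hne
    simp only [Finset.mem_filter] at hK hmin
    have hKm : K ∈ mx E I := by
      simp only [mx, Finset.mem_filter]
      refine ⟨hK.1, hK.2.1, dy_subset hK.2.1.le ht hK.2.2, fun J hJ h1 h2 h3 => ?_⟩
      have := hmin J ⟨hJ, h1, h2 hK.2.2⟩
      omega
    have hc : cnt E I t = cnt E K t + 1 := by
      unfold cnt
      rw [← Finset.card_insert_of_notMem (s := E.filter fun J => K.n < J.n ∧ t ∈ J.toSet) (a := K)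
        (by simp)]
      congr 1
      ext J
      simp only [Finset.mem_filter, Finset.mem_insert]
      constructor
      · rintro hJ
        rcases (hmin J hJ).lt_or_eq with h | h
        · exact Or.inr ⟨hJ.1, h, hJ.2.2⟩
        · exact Or.inl (dy_eq h.symm hJ.2.2 hK.2.2)
      · rintro (rfl | hJ)
        · exact hK
        · exact ⟨hJ.1, hK.2.1.trans hJ.2.1, hJ.2.2⟩
    rw [hc, pow_succ, mul_comm]
    refine le_trans ?_ le_add_self
    refine le_trans (le_of_eq ?_) (Finset.single_le_sum (fun _ _ => zero_le) hKm)
    rw [Set.indicator_of_mem hK.2.2]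

lemma weighted_bound (E : Finset DyadicI) (h : carleson (↑E) ≤ 4) (I : DyadicI)
    (G : ℝ → ℝ≥0∞) (hG : Measurable G)
    (hc : ∀ K ∈ E, I.n < K.n → ∀ t ∈ K.toSet, ∀ t' ∈ K.toSet, G t = G t') :
    ∫⁻ t in I.toSet, (1 + 8⁻¹ : ℝ≥0∞) ^ cnt E I t * G t ∂(volume.restrict (Set.Icc (0:ℝ) 1)) ≤
      (1 + (1 + 8⁻¹) * 2) * ∫⁻ t, G t ∂(volume.restrict (Set.Icc (0:ℝ) 1)) := by
  set L : ℝ≥0∞ := 1 + 8⁻¹ with hL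
  have hm : ∀ K : DyadicI, Measurable
      (K.toSet.indicator (fun t => L * L ^ cnt E K t * G t)) := fun K =>
    (((measurable_pow_cnt E K _).const_mul L).mul hG).indicator (measurableSet_dy K)
  have hpt : ∀ t ∈ I.toSet, L ^ cnt E I t * G t ≤
      G t + ∑ K ∈ mx E I, K.toSet.indicator (fun t => L * L ^ cnt E K t * G t) t := by
    intro t ht
    refine (mul_le_mul_left (cnt_le_mx E I t ht L) (G t)).trans (le_of_eq ?_)
    rw [add_mul, one_mul, Finset.sum_mul]
    congr 1
    refine Finset.sum_congr rfl fun K _ => ?_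
    by_cases hK : t ∈ K.toSet <;> simp [hK]
  refine (setLIntegral_mono' (measurableSet_dy I) hpt).trans ?_
  rw [lintegral_add_left hG, lintegral_finsetSum _ fun K _ => hm K, add_mul, one_mul]
  refine add_le_add (setLIntegral_le_lintegral _ _) ?_
  calc _ ≤ ∑ K ∈ mx E I, L * 2 * ∫⁻ t in K.toSet, G t ∂(volume.restrict (Set.Icc (0:ℝ) 1)) := by
        refine Finset.sum_le_sum fun K hK => ?_
        refine (setLIntegral_le_lintegral _ _).trans ?_
        rw [lintegral_indicator (measurableSet_dy K)]
        simp only [mx, Finset.mem_filter] at hK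
        have hcK : ∀ t ∈ K.toSet, G t = G K.lep := fun t ht =>
          hc K hK.1 hK.2.1 t ht _ (lep_mem K)
        have e1 : ∫⁻ t in K.toSet, L * L ^ cnt E K t * G t ∂(volume.restrict (Set.Icc (0:ℝ) 1)) =
            ∫⁻ t in K.toSet, (L * G K.lep) * L ^ cnt E K t ∂(volume.restrict (Set.Icc (0:ℝ) 1)) :=
          setLIntegral_congr_fun (measurableSet_dy K) fun t ht => by
            simp only [hcK t ht]; ring
        have e2 : ∫⁻ t in K.toSet, G t ∂(volume.restrict (Set.Icc (0:ℝ) 1)) = G K.lep * ENNReal.ofReal K.len := by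
          rw [setLIntegral_congr_fun (measurableSet_dy K) hcK, setLIntegral_const, vol_dy]
        rw [e1, e2, lintegral_const_mul _ (measurable_pow_cnt E K _)]
        refine (mul_le_mul_right (exp_bound E h K hK.1) _).trans (le_of_eq (by ring))
    _ = L * 2 * ∫⁻ t in ⋃ K ∈ mx E I, K.toSet, G t ∂(volume.restrict (Set.Icc (0:ℝ) 1)) := by
        rw [← Finset.mul_sum, lintegral_biUnion_finset (mx_disj E I) fun K _ => measurableSet_dy K]
    _ ≤ _ := by
        refine mul_le_mul_right ?_ _
        exact setLIntegral_le_lintegral _ _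

/-- Let `1 ≤ p < ∞` and `X` a Banach space. There is `C > 0`
depending only on `p` such that: if `f = ∑_J x_J h_J` is a finitely supported
`X`-valued Haar expansion whose Haar support `s` is partitioned into blocks
`{B(I) : I ∈ E}` with Carleson constant `⟦E⟧ ≤ 4`, then
`‖f‖_{H^p_X}^p ≤ C · ∑_{I ∈ E} ‖f_I‖_{H^p_X}^p`, where `f_I = ∑_{J ∈ B(I)} x_J h_J`. -/
theorem statement15 (p : ℝ) (hp : 1 ≤ p) :
    ∃ C : ℝ, 0 < C ∧
      ∀ (X : Type*) [NormedAddCommGroup X] [NormedSpace ℝ X] [CompleteSpace X]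
        (s : Finset DyadicI) (x : DyadicI → X), (∀ I, x I ≠ 0 ↔ I ∈ s) →
        ∀ (E : Finset DyadicI) (B : DyadicI → Finset DyadicI),
          (∀ I ∈ E, IsBlock (↑s) (↑(B I)) I) →
          (∀ I ∈ E, ∀ I' ∈ E, I ≠ I' → Disjoint (B I) (B I')) →
          (∀ J, J ∈ s ↔ ∃ I ∈ E, J ∈ B I) →
          carleson (↑E) ≤ 4 →
          HpNormV p s x ^ p ≤ C * ∑ I ∈ E, HpNormV p (B I) x ^ p := by
  obtain ⟨C, hC0, hC⟩ := add_rpow_le p hp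
  refine ⟨C * (13/4), by positivity, ?_⟩
  intro X _ _ _ s x hx E B hB hd hs hcarl
  have hnn : ∀ s' : Finset DyadicI, 0 ≤ HpNormV p s' x ^ p := fun s' =>
    Real.rpow_nonneg (Real.rpow_nonneg (integral_nonneg fun t =>
      Real.rpow_nonneg (sqFn_nonneg s' x t) _) _) _
  rw [← ENNReal.ofReal_le_ofReal_iff
    (mul_nonneg (by positivity) (Finset.sum_nonneg fun I _ => hnn _)),
    ENNReal.ofReal_mul (by positivity), ENNReal.ofReal_sum_of_nonneg fun I _ => hnn _,
    Finset.sum_congr rfl fun I _ => ofReal_HpNorm p hp (B I) x, ofReal_HpNorm p hp s x]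
  have hG : ∀ I, Measurable fun t => ENNReal.ofReal (sqFn (B I) x t ^ p) := fun I =>
    ((measurable_sqFn (B I) x).pow_const p).ennreal_ofReal
  have h98 : ENNReal.ofReal (9/8) = 1 + 8⁻¹ := by
    rw [show (9/8 : ℝ) = 1 + 8⁻¹ by norm_num, ENNReal.ofReal_add (by norm_num) (by norm_num),
      ENNReal.ofReal_inv_of_pos (by norm_num)]
    simp
  have h134 : ENNReal.ofReal (13/4) = 1 + (1 + 8⁻¹) * 2 := by
    rw [← h98, show (13/4 : ℝ) = 1 + 9/8 * 2 by norm_num,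
      ENNReal.ofReal_add (by norm_num) (by norm_num), ENNReal.ofReal_mul (by norm_num)]
    simp
  have hpt : ∀ t, ENNReal.ofReal (sqFn s x t ^ p) ≤ ENNReal.ofReal C * ∑ I ∈ E,
      I.toSet.indicator (fun t => (1 + 8⁻¹ : ℝ≥0∞) ^ cnt E I t *
        ENNReal.ofReal (sqFn (B I) x t ^ p)) t := by
    intro t
    have h1 : sqFn s x t ≤ ∑ I ∈ E.filter (fun K => t ∈ K.toSet), sqFn (B I) x t := by
      refine (sqFn_tri s E B x hd hs t).trans (le_of_eq ?_)
      rw [Finset.sum_filter]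
      refine Finset.sum_congr rfl fun I hI => ?_
      split_ifs with h
      · rfl
      · exact sqFn_zero _ _ _ fun J hJ => haar_zero fun h' => h ((hB I hI).2.2.1 J hJ h')
    have h2 := (Real.rpow_le_rpow (sqFn_nonneg s x t) h1 (by linarith : 0 ≤ p)).trans
      (chain_pow p C hp hC (fun I => sqFn (B I) x t) (fun I => sqFn_nonneg _ _ _)
        (E.filter (fun K => t ∈ K.toSet)) (injOn_chain E _ t fun K h => h))
    have hn : ∀ I, 0 ≤ sqFn (B I) x t ^ p := fun I => Real.rpow_nonneg (sqFn_nonneg _ _ _) _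
    refine (ENNReal.ofReal_le_ofReal h2).trans (le_of_eq ?_)
    rw [ENNReal.ofReal_mul hC0.le, ENNReal.ofReal_sum_of_nonneg
      fun I _ => mul_nonneg (by positivity) (hn I), Finset.sum_filter]
    congr 1
    refine Finset.sum_congr rfl fun I hI => ?_
    rw [Set.indicator_apply]
    split_ifs with h
    · rw [ENNReal.ofReal_mul (by positivity), ENNReal.ofReal_pow (by norm_num), h98, cnt_eq_card]
    · rfl
  have hm : ∀ I : DyadicI, Measurable (I.toSet.indicator (fun t => (1 + 8⁻¹ : ℝ≥0∞) ^ cnt E I t *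
        ENNReal.ofReal (sqFn (B I) x t ^ p))) := fun I =>
    ((measurable_pow_cnt E I _).mul (hG I)).indicator (measurableSet_dy I)
  refine (lintegral_mono hpt).trans ?_
  rw [lintegral_const_mul _ (Finset.measurable_fun_sum _ fun I _ => hm I),
    lintegral_finsetSum _ fun I _ => hm I, ENNReal.ofReal_mul hC0.le, mul_assoc, Finset.mul_sum (a := ENNReal.ofReal (13/4))]
  gcongr with I hI
  rw [lintegral_indicator (measurableSet_dy I), h134]
  refine weighted_bound E hcarl I _ (hG I) ?_
  intro K hK hn t ht t' ht'
  have key : ∀ J ∈ B I, K.n ≤ J.n → ∀ u ∈ K.toSet, u ∉ J.toSet := by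
    intro J hJ hJn u hu huJ
    have hJK := dy_subset hJn hu huJ
    have huI := (hB I hI).2.2.1 J hJ huJ
    have hKI := dy_subset hn.le huI hu
    have hKK : K ∈ B K := (hB K hK).2.1
    have hKB : K ∈ B I := (hB I hI).2.2.2 J hJ K ((hB K hK).1 hKK) hJK hKI
    have hne : I ≠ K := by rintro rfl; exact lt_irrefl _ hn
    exact Finset.disjoint_left.1 (hd I hI K hK hne) hKB hKK
  show ENNReal.ofReal (sqFn (B I) x t ^ p) = ENNReal.ofReal (sqFn (B I) x t' ^ p)
  rw [sqFn_congr (B I) x t t']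
  intro J hJ
  rcases lt_or_ge J.n K.n with h | h
  · exact haar_const h ht ht'
  · rw [haar_zero (key J hJ h t ht), haar_zero (key J hJ h t' ht')]
end
end

section
/- Let 0 < p < ∞ and let X be a Banach space. There are constants c_p, A_p > 0 depending only on p such that for every finitely supported X-valued Haar expansion f = Σ_J x_J h_J there exist a collection E ⊆ D, a partition of the Haar support of f into blocks {B(I) : I ∈ E} with tops in E, and integers n(I) ∈ ℤ for I ∈ E, such that: (i) ⟦E⟧ ≤ 4; (ii) 𝕊(f_I) ≤ 2^{n(I)} everywhere, where f_I = Σ_{J ∈ B(I)} x_J h_J; and (iii) c_p ‖f‖_{H^p_X}^p ≤ Σ_{I∈E} |I| 2^{p·n(I)} ≤ A_p ‖f‖_{H^p_X}^p. -/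
open MeasureTheory Set
open scoped ENNReal NNReal Classical

noncomputable section

open DyadicI

namespace BlockDec

section Rad

variable {X : Type*} [NormedAddCommGroup X] [NormedSpace ℝ X]

/-- Normalized Rademacher second moment with offset. -/
def Mn (A : Finset DyadicI) (y : DyadicI → X) (v : X) : ℝ :=
  (∑ T ∈ A.powerset, ‖v + ∑ I ∈ A, (if I ∈ T then (1 : ℝ) else -1) • y I‖ ^ 2) / 2 ^ A.card

lemma Mn_insert (A : Finset DyadicI) (a : DyadicI) (ha : a ∉ A) (y : DyadicI → X) (v : X) :
    Mn (insert a A) y v = (Mn A y (v + y a) + Mn A y (v - y a)) / 2 := by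
  unfold Mn
  rw [Finset.sum_powerset_insert ha, Finset.card_insert_of_notMem ha]
  have h1 : ∀ T ∈ A.powerset,
      ‖v + ∑ I ∈ insert a A, (if I ∈ T then (1 : ℝ) else -1) • y I‖ ^ 2
      = ‖v - y a + ∑ I ∈ A, (if I ∈ T then (1 : ℝ) else -1) • y I‖ ^ 2 := by
    intro T hT
    have haT : a ∉ T := fun h => ha (Finset.mem_powerset.1 hT h)
    rw [Finset.sum_insert ha]
    simp only [haT, if_false]
    congr 2
    module
  have h2 : ∀ T ∈ A.powerset,
      ‖v + ∑ I ∈ insert a A, (if I ∈ insert a T then (1 : ℝ) else -1) • y I‖ ^ 2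
      = ‖v + y a + ∑ I ∈ A, (if I ∈ T then (1 : ℝ) else -1) • y I‖ ^ 2 := by
    intro T hT
    rw [Finset.sum_insert ha]
    have h3 : ∑ I ∈ A, (if I ∈ insert a T then (1 : ℝ) else -1) • y I
        = ∑ I ∈ A, (if I ∈ T then (1 : ℝ) else -1) • y I := by
      apply Finset.sum_congr rfl
      intro I hI
      have : I ≠ a := fun h => ha (h ▸ hI)
      simp [Finset.mem_insert, this]
    rw [h3]
    simp only [Finset.mem_insert_self, if_true, one_smul]
    congr 2
    module
  rw [Finset.sum_congr rfl h1, Finset.sum_congr rfl h2, pow_succ]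
  field_simp
  ring

lemma Mn_nonneg (A : Finset DyadicI) (y : DyadicI → X) (v : X) : 0 ≤ Mn A y v := by
  unfold Mn; positivity

lemma sq_mid (u v : X) : ‖u‖ ^ 2 ≤ (‖u + v‖ ^ 2 + ‖u - v‖ ^ 2) / 2 := by
  have h : ‖u‖ ≤ (‖u + v‖ + ‖u - v‖) / 2 := by
    have h1 : (2 : ℝ) • u = (u + v) + (u - v) := by module
    have h2 := norm_add_le (u + v) (u - v)
    rw [← h1, norm_smul] at h2
    norm_num at h2
    linarith
  have h0 := norm_nonneg u
  nlinarith [sq_nonneg (‖u + v‖ - ‖u - v‖)]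

lemma Mn_le_insert (A : Finset DyadicI) (a : DyadicI) (y : DyadicI → X) (v : X) :
    Mn A y v ≤ Mn (insert a A) y v := by
  by_cases ha : a ∈ A
  · rw [Finset.insert_eq_of_mem ha]
  rw [Mn_insert A a ha]
  unfold Mn
  rw [← add_div, div_div, mul_comm, ← div_div]
  gcongr
  rw [← Finset.sum_add_distrib, Finset.sum_div]
  apply Finset.sum_le_sum
  intro T _
  have := sq_mid (v + ∑ I ∈ A, (if I ∈ T then (1 : ℝ) else -1) • y I) (y a)
  rw [add_right_comm v (y a), sub_add_eq_add_sub]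
  exact this

lemma Mn_mono {A B : Finset DyadicI} (h : A ⊆ B) (y : DyadicI → X) (v : X) :
    Mn A y v ≤ Mn B y v := by
  have key : ∀ C : Finset DyadicI, Mn A y v ≤ Mn (C ∪ A) y v := by
    intro C
    induction C using Finset.induction_on with
    | empty => simp
    | insert a C _ ih =>
      rw [Finset.insert_union]
      exact ih.trans (Mn_le_insert _ _ _ _)
  have := key B
  rwa [Finset.union_eq_left.2 h] at this

/-- Rademacher norm of a subfamily. -/
def rn (x : DyadicI → X) (A : Finset DyadicI) : ℝ := Real.sqrt (Mn A x 0)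

lemma rn_mono (x : DyadicI → X) {A B : Finset DyadicI} (h : A ⊆ B) : rn x A ≤ rn x B :=
  Real.sqrt_le_sqrt (Mn_mono h x 0)

lemma rn_nonneg (x : DyadicI → X) (A : Finset DyadicI) : 0 ≤ rn x A := Real.sqrt_nonneg _

lemma rn_empty (x : DyadicI → X) : rn x ∅ = 0 := by simp [rn, Mn]

lemma rn_mem (x : DyadicI → X) {A : Finset DyadicI} {I : DyadicI} (h : I ∈ A) :
    ‖x I‖ ≤ rn x A := by
  have h1 : rn x {I} ≤ rn x A := rn_mono x (by simpa using h)
  have h2 : Mn {I} x 0 = ‖x I‖ ^ 2 := by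
    have := Mn_insert ∅ I (by simp) x 0
    rw [insert_empty_eq] at this
    rw [this]
    simp [Mn]
  rw [rn, h2, Real.sqrt_sq (norm_nonneg _)] at h1
  exact h1

lemma haar_off {I : DyadicI} {t : ℝ} (h : t ∉ toSet I) : haar I t = 0 := by
  have hl : 0 < I.len := by unfold len; positivity
  unfold haar
  simp only [toSet, mem_Ico, not_and, not_lt] at h
  rw [if_neg, if_neg]
  · rintro ⟨h1, h2⟩
    have := h (by linarith)
    linarith
  · rintro ⟨h1, h2⟩
    have := h (by linarith)
    linarith

lemma haar_on {I : DyadicI} {t : ℝ} (h : t ∈ toSet I) : haar I t = 1 ∨ haar I t = -1 := by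
  unfold haar
  by_cases h1 : t ∈ Set.Ico I.lep (I.lep + I.len / 2)
  · left; rw [if_pos h1]
  · right
    rw [if_neg h1, if_pos]
    simp only [toSet, mem_Ico, not_and, not_lt] at h h1 ⊢
    exact ⟨h1 h.1, h.2⟩

lemma Mn_haar (A : Finset DyadicI) (x : DyadicI → X) (t : ℝ) (v : X) :
    Mn A (fun I => haar I t • x I) v = Mn (A.filter fun I => t ∈ toSet I) x v := by
  induction A using Finset.induction_on generalizing v with
  | empty => simp [Mn]
  | insert a A ha ih =>
    rw [Mn_insert A a ha, ih, ih, Finset.filter_insert]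
    by_cases h : t ∈ toSet a
    · rw [if_pos h, Mn_insert _ _ (by simp [ha])]
      rcases haar_on h with h | h
      · simp [h]
      · simp only [h, neg_smul, one_smul, sub_neg_eq_add, ← sub_eq_add_neg]
        ring
    · rw [if_neg h, haar_off h]
      simp

lemma sqFn_eq (s : Finset DyadicI) (x : DyadicI → X) (t : ℝ) :
    sqFn s x t = rn x (s.filter fun I => t ∈ toSet I) := by
  rw [rn, ← Mn_haar]
  unfold sqFn Mn
  congr 2
  refine Finset.sum_bij' (fun ε _ => s.filter fun I => ∃ h : I ∈ s, ε ⟨I, h⟩ = true)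
    (fun T _ => fun I => decide (I.1 ∈ T)) ?_ ?_ ?_ ?_ ?_
  · intro ε _; simp
  · intro T _; simp
  · intro ε _
    funext I
    have := I.2
    simp
  · intro T hT
    have hT' := Finset.mem_powerset.1 hT
    ext I
    simp only [Finset.mem_filter, decide_eq_true_eq, exists_prop]
    exact ⟨fun h => h.2.2, fun h => ⟨hT' h, hT' h, h⟩⟩
  · intro ε _
    rw [zero_add, ← Finset.sum_attach s]
    congr 2
    apply Finset.sum_congr rfl
    intro I _
    rw [mul_smul]
    have := I.2
    by_cases h : ε I = true <;> simp [h]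

lemma haar_meas (I : DyadicI) : Measurable (haar I) := by
  unfold haar
  exact Measurable.ite measurableSet_Ico measurable_const
    (Measurable.ite measurableSet_Ico measurable_const measurable_const)

lemma sqFn_meas (s : Finset DyadicI) (x : DyadicI → X) : Measurable (sqFn s x) := by
  unfold sqFn
  refine Real.continuous_sqrt.measurable.comp (Measurable.div_const ?_ _)
  refine Finset.measurable_sum _ fun ε _ => ?_
  refine Measurable.pow_const ?_ 2
  refine StronglyMeasurable.measurable (StronglyMeasurable.norm ?_)
  refine Finset.stronglyMeasurable_fun_sum _ fun I _ => ?_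
  exact StronglyMeasurable.smul_const
    ((measurable_const.mul (haar_meas I.1)).stronglyMeasurable) _

end Rad

section Dyadic

lemma len_pos (I : DyadicI) : 0 < I.len := by unfold len; positivity

lemma lep_mem (I : DyadicI) : I.lep ∈ toSet I := by
  have := len_pos I
  simp [toSet, this]

lemma sub_of_mem {I J : DyadicI} {t : ℝ} (hI : t ∈ toSet I) (hJ : t ∈ toSet J)
    (h : I.n ≤ J.n) : toSet J ⊆ toSet I := by
  obtain ⟨d, hd⟩ := Nat.exists_eq_add_of_le h
  have hp := len_pos J
  have hl : I.len = 2 ^ d * J.len := by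
    unfold len
    rw [hd]
    push_cast
    rw [neg_add, zpow_add₀ (by norm_num), zpow_neg _ (d : ℤ), zpow_natCast]
    field_simp
  simp only [toSet, mem_Ico, lep, hl] at hI hJ
  have h1 : (J.k : ℝ) < (I.k + 1) * 2 ^ d := by
    have : (J.k : ℝ) * J.len < ((I.k + 1) * 2 ^ d) * J.len := by nlinarith
    exact lt_of_mul_lt_mul_right this hp.le
  have h2 : (I.k : ℝ) * 2 ^ d < J.k + 1 := by
    have : ((I.k : ℝ) * 2 ^ d) * J.len < (J.k + 1) * J.len := by nlinarith
    exact lt_of_mul_lt_mul_right this hp.le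
  have h1' : J.k < (I.k + 1) * 2 ^ d := by exact_mod_cast h1
  have h2' : I.k * 2 ^ d < J.k + 1 := by exact_mod_cast h2
  have h3 : ((J.k + 1 : ℕ) : ℝ) ≤ (((I.k + 1) * 2 ^ d : ℕ) : ℝ) := by exact_mod_cast h1'
  have h4 : ((I.k * 2 ^ d : ℕ) : ℝ) ≤ ((J.k : ℕ) : ℝ) := by
    exact_mod_cast Nat.lt_succ_iff.1 h2'
  push_cast at h3 h4
  have h5 := mul_le_mul_of_nonneg_right h3 hp.le
  have h6 := mul_le_mul_of_nonneg_right h4 hp.le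
  intro u hu
  simp only [toSet, mem_Ico, lep, hl] at hu ⊢
  constructor
  · nlinarith [hu.1]
  · nlinarith [hu.2]

lemma n_le_of_sub {I J : DyadicI} (h : toSet J ⊆ toSet I) : I.n ≤ J.n := by
  have h1 : J.len ≤ I.len := by
    have hv := measure_mono (μ := volume) h
    unfold toSet at hv
    rw [Real.volume_Ico, Real.volume_Ico, add_sub_cancel_left, add_sub_cancel_left] at hv
    exact (ENNReal.ofReal_le_ofReal_iff (len_pos I).le).1 hv
  unfold len at h1
  rw [zpow_le_zpow_iff_right₀ (by norm_num)] at h1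
  omega

lemma eq_of_sub {I J : DyadicI} (h : toSet J ⊆ toSet I) (h' : toSet I ⊆ toSet J) : I = J := by
  have hn : I.n = J.n := le_antisymm (n_le_of_sub h) (n_le_of_sub h')
  have hs : toSet J = toSet I := Set.Subset.antisymm h h'
  have hlen : I.len = J.len := by simp [len, hn]
  have hl : J.lep = I.lep := by
    apply le_antisymm
    · have := hs ▸ lep_mem I; exact this.1
    · have := hs ▸ lep_mem J; exact this.1
  unfold lep at hl
  rw [hlen] at hl
  have hk : J.k = I.k := by
    have := mul_right_cancel₀ (len_pos J).ne' hl
    exact_mod_cast this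
  cases I; cases J
  simp_all

lemma n_lt_of_sub {I J : DyadicI} (h : toSet J ⊆ toSet I) (hne : J ≠ I) : I.n < J.n := by
  rcases (n_le_of_sub h).lt_or_eq with h1 | h1
  · exact h1
  · exact absurd (eq_of_sub (sub_of_mem (h (lep_mem J)) (lep_mem J) h1.le)
      (sub_of_mem (lep_mem J) (h (lep_mem J)) h1.ge)).symm hne

/-- Lebesgue measure on the unit interval. -/
def mu : Measure ℝ := volume.restrict (Set.Icc (0 : ℝ) 1)

instance : IsFiniteMeasure mu := by unfold mu; infer_instance

lemma toSet_meas (I : DyadicI) : MeasurableSet (toSet I) := measurableSet_Ico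

lemma toSet_sub (I : DyadicI) : toSet I ⊆ Set.Icc (0 : ℝ) 1 := by
  have hl := len_pos I
  have h1 : ((I.k + 1 : ℕ) : ℝ) ≤ ((2 ^ I.n : ℕ) : ℝ) := by exact_mod_cast I.hk
  have h2 : (2 : ℝ) ^ I.n * I.len = 1 := by
    unfold len
    rw [zpow_neg, zpow_natCast]
    field_simp
  push_cast at h1
  have h3 := mul_le_mul_of_nonneg_right h1 hl.le
  have h4 : (0 : ℝ) ≤ I.k * I.len := by positivity
  intro t ht
  simp only [toSet, mem_Ico, lep] at ht
  constructor
  · linarith [ht.1]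
  · nlinarith [ht.2]

lemma mu_toSet (I : DyadicI) : mu.real (toSet I) = I.len := by
  unfold mu
  rw [measureReal_restrict_apply (toSet_meas I), Set.inter_eq_left.2 (toSet_sub I)]
  unfold toSet
  rw [Real.volume_real_Ico_of_le (by linarith [len_pos I])]
  ring

end Dyadic

lemma exists_rec (Q : DyadicI → DyadicI → Prop) :
    ∃ P : DyadicI → Prop, ∀ J, P J ↔ ∀ K, K.n < J.n → P K → Q J K := by
  let wf := (measure DyadicI.n).wf
  refine ⟨wf.fix fun J P => ∀ K, ∀ h : K.n < J.n, P K h → Q J K, fun J => ?_⟩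
  rw [WellFounded.fix_eq]

lemma geom (p : ℝ) (hp : 0 < p) (T : Finset ℤ) (m : ℤ) (hm : ∀ k ∈ T, k ≤ m) :
    ∑ k ∈ T, (2 : ℝ) ^ (p * (k : ℝ)) ≤ (2 : ℝ) ^ (p * (m : ℝ)) * (1 - (2 : ℝ) ^ (-p))⁻¹ := by
  have hr : (2 : ℝ) ^ (-p) < 1 := Real.rpow_lt_one_of_one_lt_of_neg (by norm_num) (by linarith)
  have hr0 : 0 ≤ (2 : ℝ) ^ (-p) := by positivity
  have hinj : Set.InjOn (fun k : ℤ => (m - k).toNat) T := by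
    intro a ha b hb hab
    have := hm a ha
    have := hm b hb
    simp only at hab
    omega
  have h1 : ∑ k ∈ T, (2 : ℝ) ^ (p * (k : ℝ))
      = ∑ j ∈ T.image (fun k : ℤ => (m - k).toNat),
        (2 : ℝ) ^ (p * (m : ℝ)) * ((2 : ℝ) ^ (-p)) ^ j := by
    rw [Finset.sum_image hinj]
    apply Finset.sum_congr rfl
    intro k hk
    have h2 : (((m - k).toNat : ℕ) : ℝ) = (m : ℝ) - k := by
      have h3 : (((m - k).toNat : ℕ) : ℤ) = m - k := Int.toNat_of_nonneg (by linarith [hm k hk])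
      exact_mod_cast congrArg (Int.cast (R := ℝ)) h3
    rw [← Real.rpow_natCast, h2, ← Real.rpow_mul (by norm_num), ← Real.rpow_add (by norm_num)]
    congr 1
    ring
  rw [h1, ← Finset.mul_sum]
  gcongr
  rw [← tsum_geometric_of_lt_one hr0 hr]
  exact (summable_geometric_of_lt_one hr0 hr).sum_le_tsum _ (fun _ _ => by positivity)

end BlockDec

/-- Let `0 < p < ∞` and `X` a Banach space. There are constants
`c_p, A_p > 0` depending only on `p` such that every finitely supported `X`-valued
Haar expansion `f = ∑_J x_J h_J` (with Haar support `s`) admits a collection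
`E ⊆ D`, a partition of `s` into blocks `{B(I) : I ∈ E}` with tops in `E`, and
integers `n(I) ∈ ℤ`, with: (i) `⟦E⟧ ≤ 4`; (ii) `𝕊(f_I) ≤ 2^{n(I)}` everywhere,
where `f_I = ∑_{J ∈ B(I)} x_J h_J`; (iii)
`c_p ‖f‖_{H^p_X}^p ≤ ∑_{I ∈ E} |I| 2^{p n(I)} ≤ A_p ‖f‖_{H^p_X}^p`. -/
theorem statement16 (p : ℝ) (hp : 0 < p) :
    ∃ c A : ℝ, 0 < c ∧ 0 < A ∧
      ∀ (X : Type*) [NormedAddCommGroup X] [NormedSpace ℝ X] [CompleteSpace X]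
        (s : Finset DyadicI) (x : DyadicI → X), (∀ I, x I ≠ 0 ↔ I ∈ s) →
        ∃ (E : Finset DyadicI) (B : DyadicI → Finset DyadicI) (n : DyadicI → ℤ),
          (∀ I ∈ E, IsBlock (↑s) (↑(B I)) I) ∧
          (∀ I ∈ E, ∀ I' ∈ E, I ≠ I' → Disjoint (B I) (B I')) ∧
          (∀ J, J ∈ s ↔ ∃ I ∈ E, J ∈ B I) ∧
          carleson (↑E) ≤ 4 ∧
          (∀ I ∈ E, ∀ t : ℝ, sqFn (B I) x t ≤ (2 : ℝ) ^ (n I)) ∧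
          c * HpNormV p s x ^ p ≤ (∑ I ∈ E, DyadicI.len I * (2 : ℝ) ^ (p * (n I : ℝ))) ∧
          (∑ I ∈ E, DyadicI.len I * (2 : ℝ) ^ (p * (n I : ℝ))) ≤ A * HpNormV p s x ^ p := by
  have hr : (2 : ℝ) ^ (-p) < 1 := Real.rpow_lt_one_of_one_lt_of_neg (by norm_num) (by linarith)
  have hr1 : 0 < (1 - (2 : ℝ) ^ (-p))⁻¹ := inv_pos.2 (by linarith)
  refine ⟨1, 2 * ((2 : ℝ) ^ p * (1 - (2 : ℝ) ^ (-p))⁻¹), one_pos, by positivity, ?_⟩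
  intro X _ _ _ s x hx
  set S : ℝ → ℝ := sqFn s x with hS
  have hSm : Measurable S := BlockDec.sqFn_meas s x
  have hSeq : ∀ t, S t = BlockDec.rn x (s.filter fun I => t ∈ toSet I) := BlockDec.sqFn_eq s x
  have hS0 : ∀ t, 0 ≤ S t := fun t => by rw [hSeq]; exact BlockDec.rn_nonneg _ _
  have hSb : ∀ t, S t ≤ BlockDec.rn x s := fun t => by
    rw [hSeq]; exact BlockDec.rn_mono x (Finset.filter_subset _ _)
  set a : DyadicI → ℝ := fun J => BlockDec.rn x (s.filter fun K => toSet J ⊆ toSet K) with ha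
  have haS : ∀ J, ∀ t ∈ toSet J, a J ≤ S t := by
    intro J t ht
    rw [hSeq]
    apply BlockDec.rn_mono
    intro K hK
    rw [Finset.mem_filter] at hK ⊢
    exact ⟨hK.1, hK.2 ht⟩
  have hGm : ∀ c : ℝ, MeasurableSet {t | c < S t} := fun c => measurableSet_lt measurable_const hSm
  have hlev : ∀ I, ∃ m : ℤ, I ∈ s →
      BlockDec.mu.real (toSet I ∩ {t | (2 : ℝ) ^ m < S t}) ≤ I.len / 2 ∧
      ∀ k : ℤ, BlockDec.mu.real (toSet I ∩ {t | (2 : ℝ) ^ k < S t}) ≤ I.len / 2 → m ≤ k := by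
    intro I
    by_cases hI : I ∈ s
    · have hl := BlockDec.len_pos I
      have hx0 : 0 < ‖x I‖ := norm_pos_iff.2 ((hx I).2 hI)
      obtain ⟨b, hb⟩ := exists_pow_lt_of_lt_one hx0 (by norm_num : (1 / 2 : ℝ) < 1)
      obtain ⟨u, hu⟩ := pow_unbounded_of_one_lt (BlockDec.rn x s) (by norm_num : (1 : ℝ) < 2)
      have := Int.exists_least_of_bdd
        (P := fun k : ℤ => BlockDec.mu.real (toSet I ∩ {t | (2 : ℝ) ^ k < S t}) ≤ I.len / 2)
        ⟨-(b : ℤ), ?_⟩ ⟨(u : ℤ), ?_⟩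
      · obtain ⟨m, hm, hm'⟩ := this
        exact ⟨m, fun _ => ⟨hm, hm'⟩⟩
      · intro z hz
        by_contra hlt
        push Not at hlt
        have : toSet I ∩ {t | (2 : ℝ) ^ z < S t} = toSet I := by
          apply Set.inter_eq_left.2
          intro t ht
          have h1 : ‖x I‖ ≤ S t := by
            rw [hSeq]
            exact BlockDec.rn_mem x (Finset.mem_filter.2 ⟨hI, ht⟩)
          have h2 : (2 : ℝ) ^ z ≤ (2 : ℝ) ^ (-(b : ℤ)) :=
            zpow_le_zpow_right₀ (by norm_num) hlt.le
          rw [zpow_neg, zpow_natCast] at h2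
          rw [one_div, inv_pow] at hb
          exact lt_of_le_of_lt h2 (lt_of_lt_of_le hb h1)
        rw [this, BlockDec.mu_toSet] at hz
        linarith
      · have : toSet I ∩ {t | (2 : ℝ) ^ (u : ℤ) < S t} = ∅ := by
          ext t
          simp only [mem_inter_iff, mem_ofPred_eq, mem_empty_iff_false, iff_false, not_and, not_lt]
          intro _
          rw [zpow_natCast]
          exact (hSb t).trans hu.le
        rw [this, measureReal_empty]
        exact (half_pos hl).le
    · exact ⟨0, fun h => absurd h hI⟩
  choose n hn using hlev
  obtain ⟨P, hP⟩ := BlockDec.exists_rec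
    (fun J K => K ∈ s → toSet J ⊆ toSet K → (2 : ℝ) ^ n K < a J)
  set E := s.filter P with hE
  have hEs : ∀ I ∈ E, I ∈ s := fun I hI => (Finset.mem_filter.1 hI).1
  have hEP : ∀ I ∈ E, ∀ J ∈ E, toSet J ⊆ toSet I → J ≠ I → (2 : ℝ) ^ n I < a J := by
    intro I hI J hJ hs hne
    exact (hP J).1 (Finset.mem_filter.1 hJ).2 I (BlockDec.n_lt_of_sub hs hne)
      (Finset.mem_filter.1 hI).2 (hEs I hI) hs
  have hlevlt : ∀ J ∈ s, ∀ k : ℤ, (2 : ℝ) ^ k < a J → k < n J := by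
    intro J hJ k hk
    by_contra hle
    push Not at hle
    have h1 := (hn J hJ).1
    have : toSet J ∩ {t | (2 : ℝ) ^ n J < S t} = toSet J := by
      apply Set.inter_eq_left.2
      intro t ht
      exact lt_of_le_of_lt (zpow_le_zpow_right₀ (by norm_num) hle) (hk.trans_le (haS J t ht))
    rw [this, BlockDec.mu_toSet] at h1
    linarith [BlockDec.len_pos J]
  have hnlt : ∀ I ∈ E, ∀ J ∈ E, toSet J ⊆ toSet I → J ≠ I → n I < n J :=
    fun I hI J hJ hs hne => hlevlt J (hEs J hJ) _ (hEP I hI J hJ hs hne)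
  have hbot : ∀ J ∈ s, ∃ I ∈ E, toSet J ⊆ toSet I ∧
      (∀ K ∈ E, toSet J ⊆ toSet K → toSet I ⊆ toSet K) := by
    intro J hJ
    have hne : (E.filter fun K => toSet J ⊆ toSet K).Nonempty := by
      by_cases h : P J
      · exact ⟨J, by simp [hE, hJ, h]⟩
      · rw [hP J] at h
        push Not at h
        obtain ⟨K, _, hPK, hKs, hJK, _⟩ := h
        exact ⟨K, by simp [hE, hKs, hPK, hJK]⟩
    obtain ⟨I, hI, hmax⟩ := Finset.exists_max_image _ DyadicI.n hne
    rw [Finset.mem_filter] at hI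
    refine ⟨I, hI.1, hI.2, fun K hK hJK => ?_⟩
    exact BlockDec.sub_of_mem (hJK (BlockDec.lep_mem J)) (hI.2 (BlockDec.lep_mem J))
      (hmax K (Finset.mem_filter.2 ⟨hK, hJK⟩))
  set B : DyadicI → Finset DyadicI := fun I => s.filter fun J => toSet J ⊆ toSet I ∧
      (∀ K ∈ E, toSet J ⊆ toSet K → toSet I ⊆ toSet K) with hB
  have hBa : ∀ I ∈ E, ∀ J ∈ B I, a J ≤ (2 : ℝ) ^ n I := by
    intro I hI J hJ
    simp only [hB, Finset.mem_filter] at hJ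
    obtain ⟨hJs, hJI, hmin⟩ := hJ
    by_cases h : P J
    · have hJE : J ∈ E := Finset.mem_filter.2 ⟨hJs, h⟩
      have : I = J := BlockDec.eq_of_sub hJI (hmin J hJE subset_rfl)
      subst this
      by_contra hlt
      push Not at hlt
      exact lt_irrefl _ (hlevlt I hJs _ hlt)
    · rw [hP J] at h
      push Not at h
      obtain ⟨K, _, hPK, hKs, hJK, hle⟩ := h
      have hKE : K ∈ E := Finset.mem_filter.2 ⟨hKs, hPK⟩
      have hIK := hmin K hKE hJK
      refine hle.trans (zpow_le_zpow_right₀ (by norm_num) ?_)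
      by_cases hIK' : I = K
      · rw [hIK']
      · exact (hnlt K hKE I hI hIK hIK').le
  have hsmall : ∀ (A : Finset DyadicI), A ⊆ s → ∀ t, sqFn A x t = 0 ∨
      ∃ J ∈ A, t ∈ toSet J ∧ sqFn A x t ≤ a J := by
    intro A hA t
    rw [BlockDec.sqFn_eq]
    rcases Finset.eq_empty_or_nonempty (A.filter fun I => t ∈ toSet I) with h | h
    · left; rw [h, BlockDec.rn_empty]
    · right
      obtain ⟨J, hJ, hmax⟩ := Finset.exists_max_image _ DyadicI.n h
      have hJ' := Finset.mem_filter.1 hJ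
      refine ⟨J, hJ'.1, hJ'.2, ?_⟩
      apply BlockDec.rn_mono
      intro K hK
      have hK' := Finset.mem_filter.1 hK
      exact Finset.mem_filter.2 ⟨hA hK'.1, BlockDec.sub_of_mem hK'.2 hJ'.2 (hmax K hK)⟩
  have hHp : HpNormV p s x ^ p = ∫ t, S t ^ p ∂BlockDec.mu := by
    unfold HpNormV
    rw [← Real.rpow_mul, one_div, inv_mul_cancel₀ hp.ne', Real.rpow_one]
    · rfl
    · exact integral_nonneg fun t => Real.rpow_nonneg (hS0 t) _
  have hSint : Integrable (fun t => S t ^ p) BlockDec.mu := by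
    refine Integrable.of_bound (C := BlockDec.rn x s ^ p)
      (hSm.pow_const p).aestronglyMeasurable (Filter.Eventually.of_forall fun t => ?_)
    rw [Real.norm_of_nonneg (Real.rpow_nonneg (hS0 t) _)]
    exact Real.rpow_le_rpow (hS0 t) (hSb t) hp.le
  have hrz : ∀ k : ℤ, ((2 : ℝ) ^ k) ^ p = (2 : ℝ) ^ (p * (k : ℝ)) := by
    intro k
    rw [← Real.rpow_intCast, ← Real.rpow_mul (by norm_num), mul_comm]
  have hindint : ∀ (A : DyadicI → Set ℝ), (∀ I, MeasurableSet (A I)) →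
      Integrable (fun t => ∑ I ∈ E, (A I).indicator (fun _ => (2 : ℝ) ^ (p * (n I : ℝ))) t)
        BlockDec.mu ∧
      ∫ t, ∑ I ∈ E, (A I).indicator (fun _ => (2 : ℝ) ^ (p * (n I : ℝ))) t ∂BlockDec.mu
        = ∑ I ∈ E, BlockDec.mu.real (A I) * (2 : ℝ) ^ (p * (n I : ℝ)) := by
    intro A hA
    have h1 : ∀ I ∈ E, Integrable ((A I).indicator (fun _ => (2 : ℝ) ^ (p * (n I : ℝ))))
        BlockDec.mu := fun I _ => (integrable_const _).indicator (hA I)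
    refine ⟨integrable_finsetSum _ h1, ?_⟩
    rw [integral_finsetSum _ h1]
    apply Finset.sum_congr rfl
    intro I _
    rw [integral_indicator_const _ (hA I), smul_eq_mul]
  refine ⟨E, B, n, ?_, ?_, ?_, ?_, ?_, ?_, ?_⟩
  · intro I hI
    refine ⟨?_, ?_, ?_, ?_⟩
    · intro J hJ
      exact (Finset.mem_filter.1 (Finset.mem_coe.1 hJ)).1
    · exact Finset.mem_coe.2 (Finset.mem_filter.2 ⟨hEs I hI, subset_rfl, fun K _ h => h⟩)
    · intro J hJ
      exact (Finset.mem_filter.1 (Finset.mem_coe.1 hJ)).2.1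
    · intro J hJ K hK hJK hKI
      have hJ' := (Finset.mem_filter.1 (Finset.mem_coe.1 hJ)).2.2
      exact Finset.mem_coe.2 (Finset.mem_filter.2
        ⟨hK, hKI, fun L hL hKL => hJ' L hL (hJK.trans hKL)⟩)
  · intro I hI I' hI' hne
    rw [Finset.disjoint_left]
    intro J hJ hJ'
    have h1 := (Finset.mem_filter.1 hJ).2
    have h2 := (Finset.mem_filter.1 hJ').2
    exact hne (BlockDec.eq_of_sub (h2.2 I hI h1.1) (h1.2 I' hI' h2.1))
  · intro J
    constructor
    · intro hJ
      obtain ⟨I, hI, h⟩ := hbot J hJ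
      exact ⟨I, hI, Finset.mem_filter.2 ⟨hJ, h⟩⟩
    · rintro ⟨I, _, hJ⟩
      exact (Finset.mem_filter.1 hJ).1
  · unfold carleson
    refine iSup₂_le fun I hI => ?_
    have hIE : I ∈ E := hI
    have hlI := BlockDec.len_pos I
    have hsum : (∑' J : {J : DyadicI // J ∈ (E : Set DyadicI) ∧ toSet J ⊆ toSet I},
        ENNReal.ofReal (len J.1)) = ENNReal.ofReal
          (∑ J ∈ E.filter (fun J => toSet J ⊆ toSet I), len J) := by
      rw [ENNReal.ofReal_sum_of_nonneg fun J _ => (BlockDec.len_pos J).le]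
      have hset : {J : DyadicI | J ∈ (E : Set DyadicI) ∧ toSet J ⊆ toSet I}
          = ((E.filter (fun J => toSet J ⊆ toSet I) : Finset DyadicI) : Set DyadicI) := by
        ext J; simp
      change (∑' J : ({J : DyadicI | J ∈ (E : Set DyadicI) ∧ toSet J ⊆ toSet I} : Set DyadicI),
        ENNReal.ofReal (len J.1)) = _
      rw [hset]
      exact Finset.tsum_subtype _ (fun J => ENNReal.ofReal (len J))
    rw [hsum]
    apply ENNReal.div_le_of_le_mul
    rw [show (4 : ℝ≥0∞) = ENNReal.ofReal 4 by norm_num, ← ENNReal.ofReal_mul (by norm_num)]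
    apply ENNReal.ofReal_le_ofReal
    set U : DyadicI → Set ℝ := fun J => toSet J ∩ {t | S t ≤ (2 : ℝ) ^ n J} with hU
    have hUm : ∀ J, MeasurableSet (U J) := fun J =>
      (BlockDec.toSet_meas J).inter (measurableSet_le hSm measurable_const)
    have hUl : ∀ J ∈ s, len J / 2 ≤ BlockDec.mu.real (U J) := by
      intro J hJ
      have h1 := (hn J hJ).1
      have h2 := measureReal_inter_add_sdiff (μ := BlockDec.mu) (s := toSet J)
        (hGm ((2 : ℝ) ^ n J))
      rw [BlockDec.mu_toSet] at h2
      have h3 : toSet J \ {t | (2 : ℝ) ^ n J < S t} = U J := by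
        ext t; simp [hU]
      rw [h3] at h2
      linarith
    have hdisj : Set.PairwiseDisjoint
        (↑(E.filter (fun J => toSet J ⊆ toSet I)) : Set DyadicI) U := by
      have key : ∀ J ∈ E, ∀ K ∈ E, J ≠ K → ∀ t, t ∈ U J → t ∈ U K → J.n ≤ K.n → False := by
        intro J hJ K hK hne t htJ htK hle
        have hs := BlockDec.sub_of_mem htJ.1 htK.1 hle
        have h1 := hEP J hJ K hK hs hne.symm
        have h2 := haS K t htK.1
        have h3 : S t ≤ (2 : ℝ) ^ n J := htJ.2
        linarith
      intro J hJ K hK hne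
      have hJ' := (Finset.mem_filter.1 (Finset.mem_coe.1 hJ)).1
      have hK' := (Finset.mem_filter.1 (Finset.mem_coe.1 hK)).1
      refine Set.disjoint_left.2 fun t htJ htK => ?_
      rcases le_total J.n K.n with h | h
      · exact key J hJ' K hK' hne t htJ htK h
      · exact key K hK' J hJ' hne.symm t htK htJ h
    have hun := measureReal_biUnion_finset (μ := BlockDec.mu) hdisj (fun J _ => hUm J)
    have hle : BlockDec.mu.real (⋃ J ∈ E.filter (fun J => toSet J ⊆ toSet I), U J) ≤ len I := by
      rw [← BlockDec.mu_toSet I]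
      refine measureReal_mono ?_ (measure_ne_top _ _)
      refine Set.iUnion₂_subset fun J hJ => ?_
      exact Set.inter_subset_left.trans (Finset.mem_filter.1 hJ).2
    have hsl : ∑ J ∈ E.filter (fun J => toSet J ⊆ toSet I), len J / 2
        ≤ ∑ J ∈ E.filter (fun J => toSet J ⊆ toSet I), BlockDec.mu.real (U J) :=
      Finset.sum_le_sum fun J hJ => hUl J (hEs J (Finset.mem_filter.1 hJ).1)
    rw [← Finset.sum_div] at hsl
    linarith
  · intro I hI t
    rcases hsmall (B I) (Finset.filter_subset _ _) t with h | ⟨J, hJ, _, h⟩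
    · rw [h]; positivity
    · exact h.trans (hBa I hI J hJ)
  · rw [one_mul, hHp]
    obtain ⟨hi, he⟩ := hindint toSet BlockDec.toSet_meas
    simp only [BlockDec.mu_toSet] at he
    rw [← he]
    refine integral_mono hSint hi fun t => ?_
    have hnn : ∀ I ∈ E, 0 ≤ (toSet I).indicator (fun _ => (2 : ℝ) ^ (p * (n I : ℝ))) t :=
      fun I _ => Set.indicator_nonneg (fun _ _ => by positivity) _
    rcases hsmall s subset_rfl t with h | ⟨J, hJ, htJ, h⟩
    · have h0 : S t = 0 := h
      simp only [h0, Real.zero_rpow hp.ne']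
      exact Finset.sum_nonneg hnn
    · obtain ⟨I, hI, hJI⟩ := hbot J hJ
      have h1 : S t ≤ (2 : ℝ) ^ n I :=
        h.trans (hBa I hI J (Finset.mem_filter.2 ⟨hJ, hJI⟩))
      calc S t ^ p ≤ ((2 : ℝ) ^ n I) ^ p := Real.rpow_le_rpow (hS0 t) h1 hp.le
        _ = (toSet I).indicator (fun _ => (2 : ℝ) ^ (p * (n I : ℝ))) t := by
          rw [hrz, Set.indicator_of_mem (hJI.1 htJ)]
        _ ≤ _ := Finset.single_le_sum hnn hI
  · rw [hHp]
    set F : DyadicI → Set ℝ := fun I => toSet I ∩ {t | (2 : ℝ) ^ (n I - 1) < S t} with hF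
    have hFm : ∀ I, MeasurableSet (F I) := fun I => (BlockDec.toSet_meas I).inter (hGm _)
    obtain ⟨hi, he⟩ := hindint F hFm
    have h1 : ∑ I ∈ E, DyadicI.len I * (2 : ℝ) ^ (p * (n I : ℝ))
        ≤ 2 * ∑ I ∈ E, BlockDec.mu.real (F I) * (2 : ℝ) ^ (p * (n I : ℝ)) := by
      rw [Finset.mul_sum]
      refine Finset.sum_le_sum fun I hI => ?_
      rw [← mul_assoc]
      gcongr
      by_contra hlt
      push Not at hlt
      have := (hn I (hEs I hI)).2 (n I - 1) (by
        have : BlockDec.mu.real (F I) ≤ I.len / 2 := by linarith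
        exact this)
      omega
    refine h1.trans ?_
    rw [mul_assoc]
    gcongr
    rw [← he, ← integral_const_mul]
    refine integral_mono hi (hSint.const_mul _) fun t => ?_
    have h2 : ∑ I ∈ E, (F I).indicator (fun _ => (2 : ℝ) ^ (p * (n I : ℝ))) t
        = ∑ k ∈ (E.filter fun I => t ∈ F I).image n, (2 : ℝ) ^ (p * (k : ℝ)) := by
      rw [Finset.sum_image, Finset.sum_filter (s := E) (p := fun I => t ∈ F I)]
      · apply Finset.sum_congr rfl
        intro I _
        rw [Set.indicator_apply]
      · intro I hI J hJ hIJ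
        have hI' := Finset.mem_filter.1 (Finset.mem_coe.1 hI)
        have hJ' := Finset.mem_filter.1 (Finset.mem_coe.1 hJ)
        by_contra hne
        rcases le_total I.n J.n with h | h
        · exact (hnlt I hI'.1 J hJ'.1 (BlockDec.sub_of_mem hI'.2.1 hJ'.2.1 h)
            (Ne.symm hne)).ne hIJ
        · exact (hnlt J hJ'.1 I hI'.1 (BlockDec.sub_of_mem hJ'.2.1 hI'.2.1 h) hne).ne hIJ.symm
    simp only [h2]
    rcases Finset.eq_empty_or_nonempty ((E.filter fun I => t ∈ F I).image n) with h | h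
    · rw [h, Finset.sum_empty]
      have := Real.rpow_nonneg (hS0 t) p
      positivity
    · obtain ⟨m, hm, hmax⟩ := Finset.exists_max_image _ id h
      refine (BlockDec.geom p hp _ m hmax).trans ?_
      obtain ⟨I, hI, rfl⟩ := Finset.mem_image.1 hm
      have hlt : (2 : ℝ) ^ (n I - 1) < S t := (Finset.mem_filter.1 hI).2.2
      have h3 : (2 : ℝ) ^ n I ≤ 2 * S t := by
        rw [zpow_sub_one₀ (by norm_num)] at hlt
        linarith
      have h4 : (2 : ℝ) ^ (p * (n I : ℝ)) ≤ (2 : ℝ) ^ p * S t ^ p := by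
        rw [← hrz, ← Real.mul_rpow (by norm_num) (hS0 t)]
        exact Real.rpow_le_rpow (by positivity) h3 hp.le
      calc _ ≤ ((2 : ℝ) ^ p * S t ^ p) * (1 - (2 : ℝ) ^ (-p))⁻¹ := by gcongr
        _ = _ := by ring
end
end
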